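/- arXiv:1809.01313 — 2 statements merged into one kernel-verified Lean document; each statement's English description precedes it below -/
import Mathlib

section
/- Let p ≥ 2 and let f be a complex-valued harmonic function on the unit disk belonging to the harmonic Hardy space h^p. Then for all real t, ∫_{-1}^{1} |f(x e^{it})|^p dx ≤ ∫₀^{2π} |f(e^{iθ})|^p dθ. -/
open Complex MeasureTheory Real Filter

open scoped ComplexConjugate ENNReal Topology

/-! The function `|f|` is dominated by the Poisson integral `P` of `|F|`, so it suffices to bound
`∫ P ^ p` over a diameter. Since the Poisson kernel is a probability density, Jensen's inequality
gives `P[|F|] ^ (p / 2) ≤ P[|F| ^ (p / 2)]`, and only the case `p = 2` is left. There the operator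
`T` from the circle to the diameter composes with its adjoint to the kernel
`∫ P_x P_y = (2π)⁻¹ (1 + xy) / (1 - xy) ≤ (π (1 - xy))⁻¹`, which fixes the weight
`(1 - y²)^(-1/2)`: the substitution `s = (y - x) / (1 - xy)` turns the integral into that of
`(1 - s²)^(-1/2)`, which is `π`. Schur's test with this weight yields `‖T‖ ≤ 1`, which is
Frazer's inequality for `P` and `p = 2`.

The domination itself holds on every smaller circle by the Poisson formula. It passes to the
boundary because the `L^p` bound makes the dilates of `f` uniformly integrable. -/

noncomputable section

section LIntegral

variable {α β : Type*} [MeasurableSpace α] [MeasurableSpace β] {μ : Measure α} {ν : Measure β}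
  {p : ℝ}

theorem rpow_lintegral_mul_le (hp : 1 ≤ p) {k φ : α → ℝ≥0∞} (hk : AEMeasurable k μ)
    (hφ : AEMeasurable φ μ) :
    (∫⁻ a, k a * φ a ∂μ) ^ p ≤ (∫⁻ a, k a ∂μ) ^ (p - 1) * ∫⁻ a, k a * φ a ^ p ∂μ := by
  have hp0 : p ≠ 0 := by positivity
  have hφ' : AEMeasurable φ (μ.withDensity k) :=
    hφ.mono_ac (withDensity_absolutelyContinuous μ k)
  have holder := eLpNorm'_le_eLpNorm'_mul_rpow_measure_univ one_pos hp hφ'.aestronglyMeasurable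
  simp only [eLpNorm', enorm_eq_self, ENNReal.rpow_one, div_one,
    lintegral_withDensity_eq_lintegral_mul₀ hk hφ,
    lintegral_withDensity_eq_lintegral_mul₀ hk (hφ.pow_const p), Pi.mul_apply,
    withDensity_apply _ MeasurableSet.univ, Measure.restrict_univ] at holder
  calc (∫⁻ a, k a * φ a ∂μ) ^ p
      ≤ ((∫⁻ a, k a * φ a ^ p ∂μ) ^ (1 / p) * (∫⁻ a, k a ∂μ) ^ (1 - 1 / p)) ^ p := by gcongr
    _ = (∫⁻ a, k a ∂μ) ^ (p - 1) * ∫⁻ a, k a * φ a ^ p ∂μ := by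
      rw [ENNReal.mul_rpow_of_nonneg _ _ (by positivity), ← ENNReal.rpow_mul, ← ENNReal.rpow_mul,
        one_div_mul_cancel hp0, ENNReal.rpow_one, sub_mul, one_mul, one_div_mul_cancel hp0,
        mul_comm]

theorem rpow_lintegral_mul_le_lintegral_div (hp : 1 ≤ p) {k w φ : α → ℝ≥0∞}
    (hk : AEMeasurable k μ) (hw : AEMeasurable w μ) (hw_zero : ∀ᵐ a ∂μ, w a ≠ 0)
    (hkw : ∫⁻ a, k a * w a ∂μ ≠ ∞) (hφ : AEMeasurable φ μ) :
    (∫⁻ a, k a * φ a ∂μ) ^ p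
      ≤ (∫⁻ a, k a * w a ∂μ) ^ (p - 1) * ∫⁻ a, k a * w a * (φ a / w a) ^ p ∂μ := by
  have insert_weight : ∀ᵐ a ∂μ, k a * φ a = k a * w a * (φ a / w a) := by
    filter_upwards [ae_lt_top' (hk.mul hw) hkw, hw_zero] with a ha ha_zero
    obtain hka | hka := eq_or_ne (k a) 0
    · simp only [hka, zero_mul]
    · have hwa : w a ≠ ∞ := (ENNReal.lt_top_of_mul_ne_top_right ha.ne hka).ne
      rw [mul_assoc, ENNReal.mul_div_cancel ha_zero hwa]
  rw [lintegral_congr_ae insert_weight]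
  exact rpow_lintegral_mul_le hp (hk.mul hw) (hφ.div hw)

theorem mul_div_rpow_mul_rpow_sub_one_le (hp : 1 ≤ p) (x w : ℝ≥0∞) :
    w * (x / w) ^ p * w ^ (p - 1) ≤ x ^ p :=
  calc w * (x / w) ^ p * w ^ (p - 1) = w ^ (1 : ℝ) * w ^ (p - 1) * (x / w) ^ p := by
        rw [ENNReal.rpow_one, mul_right_comm]
    _ = (w * (x / w)) ^ p := by
        rw [← ENNReal.rpow_add_of_nonneg _ _ zero_le_one (by linarith), add_sub_cancel,
          ENNReal.mul_rpow_of_nonneg _ _ (by linarith)]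
    _ ≤ x ^ p := by gcongr; exact ENNReal.mul_div_le

/-- The **Schur test**: Hölder's inequality in each row, with respect to the measure `K a b * w b`,
followed by Tonelli. -/
theorem lintegral_rpow_lintegral_mul_le [SFinite μ] [SFinite ν] (hp : 1 ≤ p)
    {K : α → β → ℝ≥0∞} (hK : Measurable (Function.uncurry K))
    {v : α → ℝ≥0∞} (hv : AEMeasurable v μ) (hv_top : ∀ᵐ a ∂μ, v a ≠ ∞)
    {w : β → ℝ≥0∞} (hw : AEMeasurable w ν) (hw_zero : ∀ᵐ b ∂ν, w b ≠ 0)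
    (hKw : ∀ᵐ a ∂μ, ∫⁻ b, K a b * w b ∂ν ≤ v a)
    (hKv : ∀ᵐ b ∂ν, ∫⁻ a, K a b * v a ^ (p - 1) ∂μ ≤ w b ^ (p - 1))
    {φ : β → ℝ≥0∞} (hφ : AEMeasurable φ ν) :
    ∫⁻ a, (∫⁻ b, K a b * φ b ∂ν) ^ p ∂μ ≤ ∫⁻ b, φ b ^ p ∂ν := by
  have row : ∀ᵐ a ∂μ, (∫⁻ b, K a b * φ b ∂ν) ^ p
      ≤ ∫⁻ b, v a ^ (p - 1) * (K a b * w b * (φ b / w b) ^ p) ∂ν := by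
    filter_upwards [hKw, hv_top] with a ha ha_top
    have hKa : AEMeasurable (K a) ν := hK.of_uncurry_left.aemeasurable
    have integrand_meas : AEMeasurable (fun b => K a b * w b * (φ b / w b) ^ p) ν :=
      (hKa.mul hw).mul ((hφ.div hw).pow_const p)
    rw [lintegral_const_mul'' _ integrand_meas]
    refine (rpow_lintegral_mul_le_lintegral_div hp hKa hw hw_zero (ne_top_of_le_ne_top ha_top ha)
      hφ).trans ?_
    gcongr
  have col (b : β) : ∫⁻ a, v a ^ (p - 1) * (K a b * w b * (φ b / w b) ^ p) ∂μ
      = w b * (φ b / w b) ^ p * ∫⁻ a, K a b * v a ^ (p - 1) ∂μ := by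
    have integrand_meas : AEMeasurable (fun a => K a b * v a ^ (p - 1)) μ :=
      hK.of_uncurry_right.aemeasurable.mul (hv.pow_const _)
    rw [← lintegral_const_mul'' _ integrand_meas]
    exact lintegral_congr fun a => by ring
  calc ∫⁻ a, (∫⁻ b, K a b * φ b ∂ν) ^ p ∂μ
      ≤ ∫⁻ a, ∫⁻ b, v a ^ (p - 1) * (K a b * w b * (φ b / w b) ^ p) ∂ν ∂μ := lintegral_mono_ae row
    _ = ∫⁻ b, ∫⁻ a, v a ^ (p - 1) * (K a b * w b * (φ b / w b) ^ p) ∂μ ∂ν :=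
      lintegral_lintegral_swap <| (hv.pow_const _).comp_fst.mul <|
        (hK.aemeasurable.mul hw.comp_snd).mul ((hφ.div hw).pow_const p).comp_snd
    _ = ∫⁻ b, w b * (φ b / w b) ^ p * ∫⁻ a, K a b * v a ^ (p - 1) ∂μ ∂ν := lintegral_congr col
    _ ≤ ∫⁻ b, φ b ^ p ∂ν := by
      refine lintegral_mono_ae (hKv.mono fun b hb => ?_)
      grw [hb]
      exact mul_div_rpow_mul_rpow_sub_one_le hp _ _

theorem le_min_add_inv_rpow_mul_rpow (hp : 1 ≤ p) (x M : ℝ≥0∞) :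
    x ≤ min x M + M⁻¹ ^ (p - 1) * x ^ p := by
  obtain hx | hx := le_or_gt x M
  · rw [min_eq_left hx]
    exact le_self_add
  have one_le : 1 ≤ M⁻¹ * x := by
    rw [mul_comm, ← div_eq_mul_inv, ENNReal.le_div_iff_mul_le (.inr hx.ne_bot) (.inl hx.ne_top),
      one_mul]
    exact hx.le
  calc x = x * 1 ^ (p - 1) := by rw [ENNReal.one_rpow, mul_one]
    _ ≤ x ^ (1 : ℝ) * (M⁻¹ * x) ^ (p - 1) := by
      rw [ENNReal.rpow_one]
      gcongr
    _ = M⁻¹ ^ (p - 1) * x ^ p := by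
      rw [ENNReal.mul_rpow_of_nonneg _ _ (by linarith), mul_left_comm,
        ← ENNReal.rpow_add_of_nonneg _ _ zero_le_one (by linarith), add_sub_cancel]
    _ ≤ min x M + M⁻¹ ^ (p - 1) * x ^ p := le_add_self

theorem lintegral_le_lintegral_min_add (hp : 1 ≤ p) {φ : α → ℝ≥0∞} (hφ : AEMeasurable φ μ)
    (M : ℝ≥0∞) :
    ∫⁻ a, φ a ∂μ ≤ ∫⁻ a, min (φ a) M ∂μ + M⁻¹ ^ (p - 1) * ∫⁻ a, φ a ^ p ∂μ :=
  calc ∫⁻ a, φ a ∂μ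
      ≤ ∫⁻ a, min (φ a) M + M⁻¹ ^ (p - 1) * φ a ^ p ∂μ :=
        lintegral_mono fun a => le_min_add_inv_rpow_mul_rpow hp _ _
    _ = ∫⁻ a, min (φ a) M ∂μ + M⁻¹ ^ (p - 1) * ∫⁻ a, φ a ^ p ∂μ := by
        rw [lintegral_add_left' (hφ.min aemeasurable_const),
          lintegral_const_mul'' _ (hφ.pow_const p)]

theorem tendsto_lintegral_of_lintegral_rpow_le [IsFiniteMeasure μ] (hp : 1 < p)
    {φ : ℕ → α → ℝ≥0∞} {ψ : α → ℝ≥0∞} (hφ : ∀ n, AEMeasurable (φ n) μ) {C : ℝ≥0∞} (hC : C ≠ ∞)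
    (hφC : ∀ n, ∫⁻ a, φ n a ^ p ∂μ ≤ C)
    (hφψ : ∀ᵐ a ∂μ, Tendsto (φ · a) atTop (𝓝 (ψ a))) :
    Tendsto (fun n => ∫⁻ a, φ n a ∂μ) atTop (𝓝 (∫⁻ a, ψ a ∂μ)) := by
  -- Fatou for the lower bound; truncation at height `m` costs `O(m ^ (1 - p))` for the upper one.
  refine tendsto_of_le_liminf_of_limsup_le ?_ ?_
  · calc ∫⁻ a, ψ a ∂μ = ∫⁻ a, liminf (φ · a) atTop ∂μ :=
        lintegral_congr_ae (hφψ.mono fun a ha => ha.liminf_eq.symm)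
      _ ≤ liminf (fun n => ∫⁻ a, φ n a ∂μ) atTop := lintegral_liminf_le' hφ
  have truncated (m : ℕ) : Tendsto (fun n => ∫⁻ a, min (φ n a) m ∂μ) atTop
      (𝓝 (∫⁻ a, min (ψ a) m ∂μ)) :=
    tendsto_lintegral_of_dominated_convergence' (fun _ => (m : ℝ≥0∞))
      (fun n => (hφ n).min aemeasurable_const) (fun n => ae_of_all _ fun a => min_le_right _ _)
      (by simp [ENNReal.mul_eq_top]) (hφψ.mono fun a ha => ha.min tendsto_const_nhds)
  have limsup_le (m : ℕ) : limsup (fun n => ∫⁻ a, φ n a ∂μ) atTop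
      ≤ ∫⁻ a, ψ a ∂μ + (m : ℝ≥0∞)⁻¹ ^ (p - 1) * C :=
    calc limsup (fun n => ∫⁻ a, φ n a ∂μ) atTop
        ≤ limsup (fun n => ∫⁻ a, min (φ n a) m ∂μ + (m : ℝ≥0∞)⁻¹ ^ (p - 1) * C) atTop :=
          limsup_le_limsup (.of_forall fun n =>
            (lintegral_le_lintegral_min_add hp.le (hφ n) m).trans (by grw [hφC n]))
      _ = ∫⁻ a, min (ψ a) m ∂μ + (m : ℝ≥0∞)⁻¹ ^ (p - 1) * C :=
          ((truncated m).add_const _).limsup_eq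
      _ ≤ ∫⁻ a, ψ a ∂μ + (m : ℝ≥0∞)⁻¹ ^ (p - 1) * C := by
          gcongr
          exact min_le_left _ _
  have tail : Tendsto (fun m : ℕ => ∫⁻ a, ψ a ∂μ + (m : ℝ≥0∞)⁻¹ ^ (p - 1) * C) atTop
      (𝓝 (∫⁻ a, ψ a ∂μ)) := by
    have inv_rpow := ((ENNReal.continuous_rpow_const (y := p - 1)).tendsto 0).comp
      ENNReal.tendsto_inv_nat_nhds_zero
    rw [ENNReal.zero_rpow_of_pos (by linarith)] at inv_rpow
    simpa using (ENNReal.Tendsto.mul_const inv_rpow (.inr hC)).const_add (∫⁻ a, ψ a ∂μ)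
  exact ge_of_tendsto' tail limsup_le

theorem integral_norm_rpow_eq_toReal_lintegral {E : Type*} [NormedAddCommGroup E] {g : α → E}
    (hp : 0 ≤ p) (hg : AEStronglyMeasurable g μ) :
    ∫ a, ‖g a‖ ^ p ∂μ = (∫⁻ a, ‖g a‖ₑ ^ p ∂μ).toReal := by
  rw [integral_eq_lintegral_of_nonneg_ae (.of_forall fun a => by positivity)
    (hg.norm.aemeasurable.pow_const p).aestronglyMeasurable]
  simp only [← ENNReal.ofReal_rpow_of_nonneg (norm_nonneg _) hp, ofReal_norm]

end LIntegral

section PoissonKernel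

/-- Lebesgue measure on `(0, 2π]`, parametrising a circle by the angle; its total mass is `2π`. -/
abbrev angleMeasure : Measure ℝ := volume.restrict (Set.Ioc 0 (2 * π))

/-- The density `(2π)⁻¹ (1 - |z|²) / |e^{iθ} - z|²` of harmonic measure of the unit disk at `z`,
with respect to `angleMeasure`. -/
def poissonDensity (z : ℂ) (θ : ℝ) : ℝ := (2 * π)⁻¹ * poissonKernel 0 z (circleMap 0 1 θ)

/-- The Poisson integral of a nonnegative function `φ` of the angle. -/
def poissonExtension (φ : ℝ → ℝ≥0∞) (z : ℂ) : ℝ≥0∞ :=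
  ∫⁻ θ, ENNReal.ofReal (poissonDensity z θ) * φ θ ∂angleMeasure

variable {z w : ℂ}

theorem poissonKernel_mul_mul {a : ℂ} (ha : a ≠ 0) (z ζ : ℂ) :
    poissonKernel 0 (a * z) (a * ζ) = poissonKernel 0 z ζ := by
  have : ‖a‖ ^ 2 ≠ 0 := by positivity
  simp only [poissonKernel_def, sub_zero, ← mul_sub, norm_mul, mul_pow]
  exact mul_div_mul_left _ _ this

theorem poissonKernel_conj_mul_one {ζ : ℂ} (hζ : ‖ζ‖ = 1) (w : ℂ) :
    poissonKernel 0 (conj w * ζ) 1 = poissonKernel 0 w ζ := by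
  have norm_eq : ‖1 - conj w * ζ‖ = ‖ζ - w‖ := by
    have hζ' : conj ζ * ζ = 1 := by rw [Complex.conj_mul', hζ, ofReal_one, one_pow]
    rw [← hζ', ← sub_mul, norm_mul, hζ, mul_one, ← map_sub, Complex.norm_conj]
  simp only [poissonKernel_def, sub_zero, norm_eq, norm_mul, Complex.norm_conj, hζ, norm_one,
    mul_one]

theorem measurable_poissonDensity :
    Measurable fun q : ℂ × ℝ => poissonDensity q.1 q.2 := by
  simp only [poissonDensity, poissonKernel_def, circleMap, sub_zero]
  fun_prop

theorem poissonDensity_pos (hz : z ∈ Metric.ball 0 1) (θ : ℝ) : 0 < poissonDensity z θ := by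
  have norm_z : ‖z‖ < 1 := mem_ball_zero_iff.1 hz
  have norm_sub_pos : 0 < ‖circleMap 0 1 θ - z‖ :=
    norm_pos_iff.2 (sub_ne_zero.2 (circleMap_ne_mem_ball hz θ))
  have : ‖z‖ ^ 2 < 1 := pow_lt_one₀ (norm_nonneg z) norm_z two_ne_zero
  simp only [poissonDensity, poissonKernel_def, sub_zero, norm_circleMap_zero, abs_one, one_pow]
  have := sub_pos.2 this
  positivity

theorem poissonDensity_le (hz : z ∈ Metric.ball 0 1) (θ : ℝ) :
    poissonDensity z θ ≤ (2 * π)⁻¹ * ((1 + ‖z‖) / (1 - ‖z‖)) := by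
  have kernel_le := re_herglotzRieszKernel_le (circleMap_mem_sphere (0 : ℂ) zero_le_one θ) hz
  rw [← herglotzRieszKernel_def, ← Function.comp_apply (f := re),
    ← poissonKernel_eq_re_herglotzRieszKernel, sub_zero] at kernel_le
  unfold poissonDensity
  gcongr

theorem continuous_poissonDensity (hz : z ∈ Metric.ball 0 1) : Continuous (poissonDensity z) := by
  have ne_zero (θ : ℝ) : ‖circleMap 0 1 θ - z‖ ^ 2 ≠ 0 :=
    pow_ne_zero 2 (norm_ne_zero_iff.2 (sub_ne_zero.2 (circleMap_ne_mem_ball hz θ)))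
  unfold poissonDensity poissonKernel
  simp only [sub_zero]
  exact continuous_const.mul (.div (by fun_prop) (by fun_prop) ne_zero)

theorem integral_poissonDensity_mul {r : ℝ} (hr : 0 < r) {u : ℂ → ℝ}
    (hu : InnerProductSpace.HarmonicOnNhd u (Metric.closedBall 0 r)) (hz : z ∈ Metric.ball 0 1) :
    ∫ θ, poissonDensity z θ * u (circleMap 0 r θ) ∂angleMeasure = u (r * z) := by
  have hrz : (r : ℂ) * z ∈ Metric.ball 0 r := by
    rw [mem_ball_zero_iff] at hz ⊢
    rw [norm_mul, Complex.norm_of_nonneg hr.le]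
    exact mul_lt_of_lt_one_right hr hz
  have kernel_eq (θ : ℝ) : poissonKernel 0 (r * z) (circleMap 0 r θ)
      = poissonKernel 0 z (circleMap 0 1 θ) := by
    rw [← poissonKernel_mul_mul (ofReal_ne_zero.2 hr.ne') z]
    simp only [circleMap_zero, ofReal_one, one_mul]
  rw [← hu.circleAverage_poissonKernel_smul hrz, circleAverage_def,
    intervalIntegral.integral_of_le (by positivity), ← integral_smul]
  simp only [poissonDensity, Pi.smul_apply', smul_eq_mul, kernel_eq, mul_assoc]

theorem lintegral_poissonDensity (hz : z ∈ Metric.ball 0 1) :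
    ∫⁻ θ, ENNReal.ofReal (poissonDensity z θ) ∂angleMeasure = 1 := by
  have formula := integral_poissonDensity_mul one_pos
    (u := fun _ => 1) (fun _ _ => InnerProductSpace.harmonicAt_const _) hz
  simp only [mul_one] at formula
  rw [← ofReal_integral_eq_lintegral_ofReal (continuous_poissonDensity hz).integrableOn_Ioc
    (.of_forall fun θ => (poissonDensity_pos hz θ).le), formula, ENNReal.ofReal_one]

theorem harmonicOnNhd_poissonKernel_mul_one (hw : w ∈ Metric.ball 0 1) :
    InnerProductSpace.HarmonicOnNhd (fun ζ => poissonKernel 0 (w * ζ) 1)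
      (Metric.closedBall 0 1) := by
  intro ζ hζ
  rw [mem_ball_zero_iff] at hw
  rw [mem_closedBall_zero_iff] at hζ
  have ne_zero : 1 - w * ζ ≠ 0 := by
    refine sub_ne_zero.2 fun h => ?_
    have : ‖w * ζ‖ < 1 := by
      rw [norm_mul]
      nlinarith [norm_nonneg w]
    rw [← h, norm_one] at this
    exact this.false
  simp only [poissonKernel_eq_re_herglotzRieszKernel, Function.comp_apply, herglotzRieszKernel_def,
    sub_zero]
  refine AnalyticAt.harmonicAt_re (f := fun ζ => (1 + w * ζ) / (1 - w * ζ)) ?_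
  exact .div (by fun_prop) (by fun_prop) ne_zero

theorem integral_poissonDensity_mul_poissonDensity (hz : z ∈ Metric.ball 0 1)
    (hw : w ∈ Metric.ball 0 1) :
    ∫ θ, poissonDensity z θ * poissonDensity w θ ∂angleMeasure
      = poissonDensity (conj w * z) 0 := by
  have hw' : conj w ∈ Metric.ball 0 1 := by simpa using hw
  have formula := integral_poissonDensity_mul one_pos (harmonicOnNhd_poissonKernel_mul_one hw') hz
  have norm_circleMap (θ : ℝ) : ‖circleMap 0 1 θ‖ = 1 := by simp
  simp only [poissonKernel_conj_mul_one (norm_circleMap _), ofReal_one, one_mul] at formula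
  simp only [poissonDensity, circleMap_zero, ofReal_zero, zero_mul, Complex.exp_zero, ofReal_one,
    mul_one, ← formula, ← integral_const_mul]
  congr with θ
  ring

theorem lintegral_poissonDensity_mul_poissonDensity (hz : z ∈ Metric.ball 0 1)
    (hw : w ∈ Metric.ball 0 1) :
    ∫⁻ θ, ENNReal.ofReal (poissonDensity z θ) * ENNReal.ofReal (poissonDensity w θ) ∂angleMeasure
      = ENNReal.ofReal (poissonDensity (conj w * z) 0) := by
  have cont : Continuous fun θ => poissonDensity z θ * poissonDensity w θ :=
    (continuous_poissonDensity hz).mul (continuous_poissonDensity hw)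
  rw [← integral_poissonDensity_mul_poissonDensity hz hw, ofReal_integral_eq_lintegral_ofReal
    cont.integrableOn_Ioc (.of_forall fun θ =>
      (mul_pos (poissonDensity_pos hz θ) (poissonDensity_pos hw θ)).le)]
  simp only [ENNReal.ofReal_mul (poissonDensity_pos hz _).le]

end PoissonKernel

section Arcsin

variable {x y : ℝ}

theorem abs_mul_lt_one (hx : x ∈ Set.Ioo (-1) 1) (hy : y ∈ Set.Icc (-1) 1) : |x * y| < 1 := by
  rw [abs_mul]
  exact mul_lt_one_of_nonneg_of_lt_one_left (abs_nonneg x) (abs_lt.2 hx) (abs_le.2 hy)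

theorem one_sub_mul_pos (hx : x ∈ Set.Ioo (-1) 1) (hy : y ∈ Set.Icc (-1) 1) : 0 < 1 - x * y :=
  sub_pos.2 (abs_lt.1 (abs_mul_lt_one hx hy)).2

theorem one_sub_sq_pos (hx : x ∈ Set.Ioo (-1) 1) : 0 < 1 - x ^ 2 := by
  have := one_sub_mul_pos hx (Set.Ioo_subset_Icc_self hx)
  rwa [sq]

theorem hasDerivAt_moebius (hxy : 1 - x * y ≠ 0) :
    HasDerivAt (fun y => (y - x) / (1 - x * y)) ((1 - x ^ 2) / (1 - x * y) ^ 2) y :=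
  (((hasDerivAt_id' y).sub_const x).div
    (((hasDerivAt_id' y).const_mul x).const_sub 1) hxy).congr_deriv (by ring)

theorem one_sub_moebius_sq (hxy : 1 - x * y ≠ 0) :
    1 - ((y - x) / (1 - x * y)) ^ 2 = (1 - x ^ 2) * (1 - y ^ 2) / (1 - x * y) ^ 2 := by
  have := pow_ne_zero 2 hxy
  rw [div_pow, eq_div_iff this, sub_mul, div_mul_cancel₀ _ this]
  ring

theorem hasDerivAt_arcsin_moebius (hx : x ∈ Set.Ioo (-1) 1) (hy : y ∈ Set.Ioo (-1) 1) :
    HasDerivAt (fun y => arcsin ((y - x) / (1 - x * y)))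
      (√(1 - x ^ 2) * ((1 - x * y)⁻¹ * (√(1 - y ^ 2))⁻¹)) y := by
  have hxy := one_sub_mul_pos hx (Set.Ioo_subset_Icc_self hy)
  have hx2 := one_sub_sq_pos hx
  have hy2 := one_sub_sq_pos hy
  have sq_lt_one : ((y - x) / (1 - x * y)) ^ 2 < 1 := by
    rw [← sub_pos, one_sub_moebius_sq hxy.ne']
    positivity
  obtain ⟨gt_neg_one, lt_one⟩ := abs_lt.1 ((sq_lt_one_iff_abs_lt_one _).1 sq_lt_one)
  refine ((Real.hasDerivAt_arcsin gt_neg_one.ne' lt_one.ne).comp y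
    (hasDerivAt_moebius hxy.ne')).congr_deriv ?_
  rw [one_sub_moebius_sq hxy.ne', Real.sqrt_div (by positivity), Real.sqrt_mul hx2.le,
    Real.sqrt_sq hxy.le]
  have := Real.sqrt_pos.2 hx2
  have := Real.sqrt_pos.2 hy2
  field_simp
  rw [Real.sq_sqrt hx2.le]

theorem lintegral_inv_one_sub_mul_inv_sqrt (hx : x ∈ Set.Ioo (-1) 1) :
    ∫⁻ y in Set.Ioo (-1) 1, ENNReal.ofReal ((1 - x * y)⁻¹ * (√(1 - y ^ 2))⁻¹)
      = ENNReal.ofReal (π * (√(1 - x ^ 2))⁻¹) := by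
  have sqrt_pos : 0 < √(1 - x ^ 2) := Real.sqrt_pos.2 (one_sub_sq_pos hx)
  have cont : ContinuousOn (fun y => (√(1 - x ^ 2))⁻¹ * arcsin ((y - x) / (1 - x * y)))
      (Set.Icc (-1) 1) :=
    continuousOn_const.mul <| Real.continuous_arcsin.comp_continuousOn <|
      .div (by fun_prop) (by fun_prop) fun y hy => (one_sub_mul_pos hx hy).ne'
  have deriv : ∀ y ∈ Set.Ioo (-1) 1, HasDerivAt
      (fun y => (√(1 - x ^ 2))⁻¹ * arcsin ((y - x) / (1 - x * y)))
      ((1 - x * y)⁻¹ * (√(1 - y ^ 2))⁻¹) y := fun y hy =>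
    ((hasDerivAt_arcsin_moebius hx hy).const_mul _).congr_deriv
      (inv_mul_cancel_left₀ sqrt_pos.ne' _)
  have nonneg : ∀ y ∈ Set.Ioo (-1) 1, 0 ≤ (1 - x * y)⁻¹ * (√(1 - y ^ 2))⁻¹ := fun y hy =>
    mul_nonneg (inv_nonneg.2 (one_sub_mul_pos hx (Set.Ioo_subset_Icc_self hy)).le) (by positivity)
  have integrable := intervalIntegral.integrableOn_deriv_of_nonneg cont deriv nonneg
  have ftc := intervalIntegral.integral_eq_sub_of_hasDerivAt_of_le (by norm_num) cont deriv
    ((intervalIntegrable_iff_integrableOn_Ioc_of_le (by norm_num)).2 integrable)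
  have moebius_one : (1 - x) / (1 - x * 1) = 1 := by
    rw [mul_one, div_self (sub_ne_zero.2 hx.2.ne')]
  have moebius_neg_one : (-1 - x) / (1 - x * -1) = -1 := by
    rw [div_eq_iff (by linarith [hx.1])]
    ring
  rw [intervalIntegral.integral_of_le (by norm_num), integral_Ioc_eq_integral_Ioo, moebius_one,
    moebius_neg_one, arcsin_one, arcsin_neg_one] at ftc
  rw [← ofReal_integral_eq_lintegral_ofReal (integrable.mono_set Set.Ioo_subset_Ioc_self)
    ((ae_restrict_iff' measurableSet_Ioo).2 (.of_forall nonneg)), ftc]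
  ring_nf

end Arcsin

section Frazer

variable {x : ℝ}

/-- The weight `(1 - x²)^(-1/2)` on `(-1, 1)`, which is invariant under the kernel `(π(1 - xy))⁻¹`
and serves as the Schur test weight on a diameter. -/
def arcsineWeight (x : ℝ) : ℝ≥0∞ := ENNReal.ofReal (√(1 - x ^ 2))⁻¹

/-- The Schur test weight on the circle: the adjoint of the Poisson extension to the diameter of
direction `e^{it}`, applied to `arcsineWeight`. -/
def circleWeight (t θ : ℝ) : ℝ≥0∞ :=
  ∫⁻ y in Set.Ioo (-1) 1, ENNReal.ofReal (poissonDensity (circleMap 0 y t) θ) * arcsineWeight y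

theorem measurable_arcsineWeight : Measurable arcsineWeight := by
  unfold arcsineWeight
  fun_prop

theorem arcsineWeight_pos (hx : x ∈ Set.Ioo (-1) 1) : 0 < arcsineWeight x :=
  ENNReal.ofReal_pos.2 (inv_pos.2 (Real.sqrt_pos.2 (one_sub_sq_pos hx)))

theorem circleMap_zero_mem_ball (hx : x ∈ Set.Ioo (-1) 1) (t : ℝ) :
    circleMap 0 x t ∈ Metric.ball 0 1 := by
  rw [mem_ball_zero_iff, norm_circleMap_zero]
  exact abs_lt.2 hx

theorem conj_circleMap_mul_circleMap (x y t : ℝ) :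
    conj (circleMap 0 y t) * circleMap 0 x t = ↑(x * y) := by
  have : conj (cexp (t * I)) * cexp (t * I) = 1 := by
    rw [Complex.conj_mul', norm_exp_ofReal_mul_I, ofReal_one, one_pow]
  simp only [circleMap_zero, map_mul, conj_ofReal, ofReal_mul]
  linear_combination (x * y : ℂ) * this

theorem poissonDensity_ofReal_zero_le {s : ℝ} (hs : s ∈ Set.Ioo (-1) 1) :
    poissonDensity s 0 ≤ π⁻¹ * (1 - s)⁻¹ := by
  have one_sub_pos : 0 < 1 - s := sub_pos.2 hs.2
  have norm_eq : ‖(1 : ℂ) - s‖ = 1 - s := by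
    rw [← ofReal_one, ← ofReal_sub, Complex.norm_of_nonneg one_sub_pos.le]
  have density_eq : poissonDensity s 0 = π⁻¹ * (1 - s)⁻¹ * ((1 + s) / 2) := by
    simp only [poissonDensity, poissonKernel_def, circleMap_zero, ofReal_one, ofReal_zero, zero_mul,
      Complex.exp_zero, mul_one, sub_zero, norm_eq, norm_one, Complex.norm_real, Real.norm_eq_abs,
      sq_abs]
    field_simp
    ring
  rw [density_eq]
  exact mul_le_of_le_one_right (by positivity) (by linarith [hs.2])

theorem measurable_poissonDensity_circleMap (t : ℝ) : Measurable
    (Function.uncurry fun x θ => ENNReal.ofReal (poissonDensity (circleMap 0 x t) θ)) := by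
  have : Measurable fun q : ℝ × ℝ => (circleMap 0 q.1 t, q.2) := by
    simp only [circleMap_zero]
    fun_prop
  exact (measurable_poissonDensity.comp this).ennreal_ofReal

theorem measurable_poissonDensity_mul_arcsineWeight (t : ℝ) : Measurable
    (Function.uncurry fun y θ =>
      ENNReal.ofReal (poissonDensity (circleMap 0 y t) θ) * arcsineWeight y) :=
  (measurable_poissonDensity_circleMap t).mul (measurable_arcsineWeight.comp measurable_fst)

theorem measurable_circleWeight (t : ℝ) : Measurable (circleWeight t) :=
  (measurable_poissonDensity_mul_arcsineWeight t).lintegral_prod_left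

theorem circleWeight_pos (t θ : ℝ) : 0 < circleWeight t θ := by
  have integrand_pos : ∀ y ∈ Set.Ioo (-1) 1,
      0 < ENNReal.ofReal (poissonDensity (circleMap 0 y t) θ) * arcsineWeight y := fun y hy =>
    ENNReal.mul_pos (ENNReal.ofReal_pos.2 (poissonDensity_pos (circleMap_zero_mem_ball hy t) θ)).ne'
      (arcsineWeight_pos hy).ne'
  refine (setLIntegral_pos_iff
    (measurable_poissonDensity_mul_arcsineWeight t).of_uncurry_right).2 ?_
  have volume_pos : 0 < volume (Set.Ioo (-1 : ℝ) 1) := by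
    rw [Real.volume_Ioo, ENNReal.ofReal_pos]
    norm_num
  exact volume_pos.trans_le (measure_mono fun y hy => ⟨(integrand_pos y hy).ne', hy⟩)

theorem lintegral_poissonDensity_circleMap_mul_le (hx : x ∈ Set.Ioo (-1) 1) {y : ℝ}
    (hy : y ∈ Set.Ioo (-1) 1) (t : ℝ) :
    ∫⁻ θ, ENNReal.ofReal (poissonDensity (circleMap 0 x t) θ) *
        ENNReal.ofReal (poissonDensity (circleMap 0 y t) θ) ∂angleMeasure
      ≤ ENNReal.ofReal (π⁻¹ * (1 - x * y)⁻¹) := by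
  have mul_mem : x * y ∈ Set.Ioo (-1) 1 := abs_lt.1 (abs_mul_lt_one hx (Set.Ioo_subset_Icc_self hy))
  rw [lintegral_poissonDensity_mul_poissonDensity (circleMap_zero_mem_ball hx t)
    (circleMap_zero_mem_ball hy t), conj_circleMap_mul_circleMap]
  exact ENNReal.ofReal_le_ofReal (poissonDensity_ofReal_zero_le mul_mem)

theorem lintegral_inv_one_sub_mul_mul_arcsineWeight (hx : x ∈ Set.Ioo (-1) 1) :
    ∫⁻ y in Set.Ioo (-1) 1, ENNReal.ofReal (π⁻¹ * (1 - x * y)⁻¹) * arcsineWeight y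
      = arcsineWeight x := by
  calc ∫⁻ y in Set.Ioo (-1) 1, ENNReal.ofReal (π⁻¹ * (1 - x * y)⁻¹) * arcsineWeight y
      = ∫⁻ y in Set.Ioo (-1) 1,
          ENNReal.ofReal π⁻¹ * ENNReal.ofReal ((1 - x * y)⁻¹ * (√(1 - y ^ 2))⁻¹) := by
        refine setLIntegral_congr_fun measurableSet_Ioo fun y hy => ?_
        have := one_sub_mul_pos hx (Set.Ioo_subset_Icc_self hy)
        simp only [arcsineWeight]
        rw [← ENNReal.ofReal_mul (by positivity), ← ENNReal.ofReal_mul (by positivity), mul_assoc]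
    _ = arcsineWeight x := by
        rw [lintegral_const_mul' _ _ ENNReal.ofReal_ne_top, lintegral_inv_one_sub_mul_inv_sqrt hx,
          ← ENNReal.ofReal_mul (by positivity), inv_mul_cancel_left₀ Real.pi_ne_zero, arcsineWeight]

theorem poissonExtension_circleWeight_le (hx : x ∈ Set.Ioo (-1) 1) (t : ℝ) :
    poissonExtension (circleWeight t) (circleMap 0 x t) ≤ arcsineWeight x := by
  let K (y θ : ℝ) : ℝ≥0∞ := ENNReal.ofReal (poissonDensity (circleMap 0 y t) θ)
  have hK : Measurable (Function.uncurry K) := measurable_poissonDensity_circleMap t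
  have hKx (y : ℝ) : Measurable (K y) := hK.of_uncurry_left
  have hKw := measurable_poissonDensity_mul_arcsineWeight t
  calc poissonExtension (circleWeight t) (circleMap 0 x t)
      = ∫⁻ θ, (∫⁻ y in Set.Ioo (-1) 1, K x θ * (K y θ * arcsineWeight y)) ∂angleMeasure :=
        lintegral_congr fun θ => (lintegral_const_mul _ hKw.of_uncurry_right).symm
    _ = ∫⁻ y in Set.Ioo (-1) 1, ∫⁻ θ, K x θ * (K y θ * arcsineWeight y) ∂angleMeasure :=
        lintegral_lintegral_swap
          (((hKx x).comp measurable_fst).mul (hKw.comp measurable_swap)).aemeasurable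
    _ = ∫⁻ y in Set.Ioo (-1) 1, (∫⁻ θ, K x θ * K y θ ∂angleMeasure) * arcsineWeight y := by
        refine lintegral_congr fun y => ?_
        have hKK : Measurable fun θ => K x θ * K y θ := (hKx x).mul (hKx y)
        simp only [← lintegral_mul_const _ hKK, mul_assoc]
    _ ≤ ∫⁻ y in Set.Ioo (-1) 1, ENNReal.ofReal (π⁻¹ * (1 - x * y)⁻¹) * arcsineWeight y :=
        setLIntegral_mono' measurableSet_Ioo fun y hy => by
          gcongr
          exact lintegral_poissonDensity_circleMap_mul_le hx hy t
    _ = arcsineWeight x := lintegral_inv_one_sub_mul_mul_arcsineWeight hx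

theorem lintegral_poissonExtension_sq_le {φ : ℝ → ℝ≥0∞} (hφ : AEMeasurable φ angleMeasure)
    (t : ℝ) :
    ∫⁻ x in Set.Ioo (-1) 1, poissonExtension φ (circleMap 0 x t) ^ (2 : ℝ)
      ≤ ∫⁻ θ, φ θ ^ (2 : ℝ) ∂angleMeasure := by
  have two_sub_one : (2 : ℝ) - 1 = 1 := by norm_num
  refine lintegral_rpow_lintegral_mul_le one_le_two (measurable_poissonDensity_circleMap t)
    measurable_arcsineWeight.aemeasurable (.of_forall fun x => ENNReal.ofReal_ne_top)
    (measurable_circleWeight t).aemeasurable (.of_forall fun θ => (circleWeight_pos t θ).ne')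
    ?_ ?_ hφ
  · exact (ae_restrict_iff' measurableSet_Ioo).2
      (.of_forall fun x hx => poissonExtension_circleWeight_le hx t)
  · simp only [two_sub_one, ENNReal.rpow_one]
    exact .of_forall fun θ => le_rfl

theorem poissonExtension_rpow_le {p : ℝ} (hp : 1 ≤ p) {φ : ℝ → ℝ≥0∞}
    (hφ : AEMeasurable φ angleMeasure) {z : ℂ} (hz : z ∈ Metric.ball 0 1) :
    poissonExtension φ z ^ p ≤ poissonExtension (fun θ => φ θ ^ p) z := by
  have jensen := rpow_lintegral_mul_le hp
    (continuous_poissonDensity hz).measurable.ennreal_ofReal.aemeasurable hφ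
  rwa [lintegral_poissonDensity hz, ENNReal.one_rpow, one_mul] at jensen

theorem lintegral_poissonExtension_rpow_le {p : ℝ} (hp : 2 ≤ p) {φ : ℝ → ℝ≥0∞}
    (hφ : AEMeasurable φ angleMeasure) (t : ℝ) :
    ∫⁻ x in Set.Ioo (-1) 1, poissonExtension φ (circleMap 0 x t) ^ p
      ≤ ∫⁻ θ, φ θ ^ p ∂angleMeasure := by
  have rpow_half_sq (a : ℝ≥0∞) : a ^ p = (a ^ (p / 2)) ^ (2 : ℝ) := by
    rw [← ENNReal.rpow_mul, div_mul_cancel₀ _ two_ne_zero]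
  simp only [rpow_half_sq]
  calc ∫⁻ x in Set.Ioo (-1) 1, (poissonExtension φ (circleMap 0 x t) ^ (p / 2)) ^ (2 : ℝ)
      ≤ ∫⁻ x in Set.Ioo (-1) 1,
          poissonExtension (fun θ => φ θ ^ (p / 2)) (circleMap 0 x t) ^ (2 : ℝ) :=
        setLIntegral_mono' measurableSet_Ioo fun x hx => by
          grw [poissonExtension_rpow_le (by linarith) hφ (circleMap_zero_mem_ball hx t)]
    _ ≤ ∫⁻ θ, (φ θ ^ (p / 2)) ^ (2 : ℝ) ∂angleMeasure :=
        lintegral_poissonExtension_sq_le (hφ.pow_const _) t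

end Frazer

section RadialLimit

variable {X : Type*} [TopologicalSpace X] {f : ℂ → X} {F : ℝ → X}

/-- `F θ` is the radial limit of `f` at `e^{iθ}`, for almost every `θ ∈ (0, 2π]`. -/
def HasRadialLimit (f : ℂ → X) (F : ℝ → X) : Prop :=
  ∀ᵐ θ ∂angleMeasure, Tendsto (fun r : ℝ => f (circleMap 0 r θ)) (𝓝[<] 1) (𝓝 (F θ))

theorem continuous_comp_circleMap {r : ℝ} (hr : r ∈ Set.Ioo (-1) 1)
    (hf : ContinuousOn f (Metric.ball 0 1)) : Continuous fun θ => f (circleMap 0 r θ) :=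
  hf.comp_continuous (continuous_circleMap 0 r) fun θ => circleMap_zero_mem_ball hr θ

theorem exists_seq_tendsto_nhdsLT_one :
    ∃ r : ℕ → ℝ, (∀ n, r n ∈ Set.Ioo 0 1) ∧ Tendsto r atTop (𝓝[<] 1) := by
  obtain ⟨r, -, hr, r_tendsto⟩ := exists_seq_strictMono_tendsto' (zero_lt_one (α := ℝ))
  exact ⟨r, hr, tendsto_nhdsWithin_iff.2 ⟨r_tendsto, .of_forall fun n => (hr n).2⟩⟩

theorem HasRadialLimit.aestronglyMeasurable [TopologicalSpace.PseudoMetrizableSpace X]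
    (hF : HasRadialLimit f F) (hf : ContinuousOn f (Metric.ball 0 1)) :
    AEStronglyMeasurable F angleMeasure := by
  obtain ⟨r, hr, r_tendsto⟩ := exists_seq_tendsto_nhdsLT_one
  refine aestronglyMeasurable_of_tendsto_ae atTop (fun n => ?_)
    (hF.mono fun θ hθ => hθ.comp r_tendsto)
  exact (continuous_comp_circleMap ⟨by linarith [(hr n).1], (hr n).2⟩ hf).aestronglyMeasurable

end RadialLimit

section HarmonicHardy

variable {E : Type*} [NormedAddCommGroup E] [NormedSpace ℝ E] {f : ℂ → E} {F : ℝ → E} {p : ℝ}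

/-- Membership in the harmonic Hardy space `h^p` of the unit disk, for functions with values in a
real normed space: the `p`-th integral means over the circles `|z| = r < 1` are bounded. -/
structure MemHarmonicHardy (f : ℂ → E) (p : ℝ) : Prop where
  harmonicOnNhd : InnerProductSpace.HarmonicOnNhd f (Metric.ball 0 1)
  exists_lintegral_le : ∃ C ≠ ∞, ∀ r ∈ Set.Ico 0 1,
    ∫⁻ θ, ‖f (circleMap 0 r θ)‖ₑ ^ p ∂angleMeasure ≤ C

theorem enorm_mul_le_poissonExtension {r : ℝ} (hr : 0 < r)
    (hf : InnerProductSpace.HarmonicOnNhd f (Metric.closedBall 0 r)) {z : ℂ}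
    (hz : z ∈ Metric.ball 0 1) :
    ‖f (r * z)‖ₑ ≤ poissonExtension (fun θ => ‖f (circleMap 0 r θ)‖ₑ) z := by
  obtain ⟨ℓ, norm_ℓ, hℓ⟩ := exists_dual_vector'' ℝ (f (r * z))
  have formula := integral_poissonDensity_mul hr (hf.comp_CLM (l := ℓ)) hz
  simp only [Function.comp_apply] at formula
  have enorm_ℓ_le (v : E) : ‖ℓ v‖ₑ ≤ ‖v‖ₑ := by
    rw [enorm_le_iff_norm_le]
    simpa only [one_mul] using ℓ.le_of_opNorm_le norm_ℓ v
  calc ‖f (r * z)‖ₑ = ENNReal.ofReal (ℓ (f (r * z))) := by rw [hℓ]; exact (ofReal_norm _).symm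
    _ = ENNReal.ofReal (∫ θ, poissonDensity z θ * ℓ (f (circleMap 0 r θ)) ∂angleMeasure) := by
        rw [formula]
    _ ≤ ∫⁻ θ, ‖poissonDensity z θ * ℓ (f (circleMap 0 r θ))‖ₑ ∂angleMeasure :=
        (Real.ofReal_le_enorm _).trans (enorm_integral_le_lintegral_enorm _)
    _ ≤ poissonExtension (fun θ => ‖f (circleMap 0 r θ)‖ₑ) z := by
        refine lintegral_mono fun θ => ?_
        rw [enorm_mul, Real.enorm_of_nonneg (poissonDensity_pos hz θ).le]
        gcongr
        exact enorm_ℓ_le _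

theorem tendsto_poissonExtension (hp : 1 < p) {φ : ℕ → ℝ → ℝ≥0∞} {ψ : ℝ → ℝ≥0∞}
    (hφ : ∀ n, AEMeasurable (φ n) angleMeasure) {C : ℝ≥0∞} (hC : C ≠ ∞)
    (hφC : ∀ n, ∫⁻ θ, φ n θ ^ p ∂angleMeasure ≤ C)
    (hφψ : ∀ᵐ θ ∂angleMeasure, Tendsto (φ · θ) atTop (𝓝 (ψ θ))) {z : ℂ}
    (hz : z ∈ Metric.ball 0 1) :
    Tendsto (fun n => poissonExtension (φ n) z) atTop (𝓝 (poissonExtension ψ z)) := by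
  set M : ℝ≥0∞ := ENNReal.ofReal ((2 * π)⁻¹ * ((1 + ‖z‖) / (1 - ‖z‖)))
  have density_meas := (continuous_poissonDensity hz).measurable.ennreal_ofReal
  refine tendsto_lintegral_of_lintegral_rpow_le hp (C := M ^ p * C)
    (fun n => density_meas.aemeasurable.mul (hφ n))
    (ENNReal.mul_ne_top (ENNReal.rpow_ne_top_of_nonneg (by linarith) ENNReal.ofReal_ne_top) hC)
    (fun n => ?_)
    (hφψ.mono fun θ hθ => ENNReal.Tendsto.const_mul hθ (.inr ENNReal.ofReal_ne_top))
  calc ∫⁻ θ, (ENNReal.ofReal (poissonDensity z θ) * φ n θ) ^ p ∂angleMeasure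
      ≤ ∫⁻ θ, M ^ p * φ n θ ^ p ∂angleMeasure := lintegral_mono fun θ => by
        rw [ENNReal.mul_rpow_of_nonneg _ _ (by linarith)]
        gcongr
        exact ENNReal.ofReal_le_ofReal (poissonDensity_le hz θ)
    _ = M ^ p * ∫⁻ θ, φ n θ ^ p ∂angleMeasure := lintegral_const_mul'' _ ((hφ n).pow_const p)
    _ ≤ M ^ p * C := by grw [hφC n]

namespace HasRadialLimit

theorem lintegral_enorm_rpow_ne_top (hF : HasRadialLimit f F) (hf : MemHarmonicHardy f p) :
    ∫⁻ θ, ‖F θ‖ₑ ^ p ∂angleMeasure ≠ ∞ := by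
  obtain ⟨C, hC, hfC⟩ := hf.exists_lintegral_le
  obtain ⟨r, hr, r_tendsto⟩ := exists_seq_tendsto_nhdsLT_one
  have cont (n : ℕ) := continuous_comp_circleMap ⟨by linarith [(hr n).1], (hr n).2⟩
    hf.harmonicOnNhd.continuousOn
  refine ne_top_of_le_ne_top hC ?_
  calc ∫⁻ θ, ‖F θ‖ₑ ^ p ∂angleMeasure
      = ∫⁻ θ, liminf (fun n => ‖f (circleMap 0 (r n) θ)‖ₑ ^ p) atTop ∂angleMeasure :=
        lintegral_congr_ae <| hF.mono fun θ hθ =>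
          ((hθ.comp r_tendsto).enorm.ennrpow_const p).liminf_eq.symm
    _ ≤ liminf (fun n => ∫⁻ θ, ‖f (circleMap 0 (r n) θ)‖ₑ ^ p ∂angleMeasure) atTop :=
        lintegral_liminf_le fun n => (cont n).enorm.measurable.pow_const p
    _ ≤ C := liminf_le_of_frequently_le'
        (.of_forall fun n => hfC (r n) (Set.Ioo_subset_Ico_self (hr n)))

theorem enorm_le_poissonExtension (hF : HasRadialLimit f F) (hf : MemHarmonicHardy f p)
    (hp : 1 < p) {z : ℂ} (hz : z ∈ Metric.ball 0 1) :
    ‖f z‖ₑ ≤ poissonExtension (fun θ => ‖F θ‖ₑ) z := by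
  obtain ⟨C, hC, hfC⟩ := hf.exists_lintegral_le
  obtain ⟨r, hr, r_tendsto⟩ := exists_seq_tendsto_nhdsLT_one
  have cont := hf.harmonicOnNhd.continuousOn
  have dilation_tendsto : Tendsto (fun n => f (r n * z)) atTop (𝓝 (f z)) := by
    refine (cont.continuousAt (Metric.isOpen_ball.mem_nhds hz)).tendsto.comp ?_
    have r_tendsto_one := (tendsto_nhds_of_tendsto_nhdsWithin r_tendsto).ofReal
    simpa only [ofReal_one, one_mul] using r_tendsto_one.mul_const z
  have extension_tendsto := tendsto_poissonExtension hp
    (fun n => (continuous_comp_circleMap ⟨by linarith [(hr n).1], (hr n).2⟩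
      cont).enorm.measurable.aemeasurable)
    hC (fun n => hfC (r n) (Set.Ioo_subset_Ico_self (hr n)))
    (hF.mono fun θ hθ => (hθ.comp r_tendsto).enorm) hz
  refine le_of_tendsto_of_tendsto' dilation_tendsto.enorm extension_tendsto fun n => ?_
  exact enorm_mul_le_poissonExtension (hr n).1
    (hf.harmonicOnNhd.mono (Metric.closedBall_subset_ball (hr n).2)) hz

end HasRadialLimit

theorem MemHarmonicHardy.of_integral_le (hp : 0 ≤ p)
    (hf : InnerProductSpace.HarmonicOnNhd f (Metric.ball 0 1)) {C : ℝ}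
    (hC : ∀ r ∈ Set.Ico 0 1, ∫ θ in 0..2 * π, ‖f (circleMap 0 r θ)‖ ^ p ≤ C) :
    MemHarmonicHardy f p := by
  refine ⟨hf, ENNReal.ofReal C, ENNReal.ofReal_ne_top, fun r hr => ?_⟩
  have cont := continuous_comp_circleMap ⟨by linarith [hr.1], hr.2⟩ hf.continuousOn
  have cont_rpow : Continuous fun θ => ‖f (circleMap 0 r θ)‖ ^ p :=
    cont.norm.rpow_const fun _ => .inr hp
  calc ∫⁻ θ, ‖f (circleMap 0 r θ)‖ₑ ^ p ∂angleMeasure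
      = ENNReal.ofReal (∫ θ, ‖f (circleMap 0 r θ)‖ ^ p ∂angleMeasure) := by
        rw [ofReal_integral_eq_lintegral_ofReal cont_rpow.integrableOn_Ioc
          (.of_forall fun θ => by positivity)]
        simp only [← ENNReal.ofReal_rpow_of_nonneg (norm_nonneg _) hp, ofReal_norm]
    _ ≤ ENNReal.ofReal C := by
        rw [← intervalIntegral.integral_of_le (by positivity)]
        exact ENNReal.ofReal_le_ofReal (hC r hr)

theorem harmonicOnNhd_add_conj {s : Set ℂ} (hs : IsOpen s) {h g f : ℂ → ℂ} (hh : AnalyticOn ℂ h s)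
    (hg : AnalyticOn ℂ g s) (hf : ∀ z ∈ s, f z = h z + conj (g z)) :
    InnerProductSpace.HarmonicOnNhd f s := by
  intro z hz
  rw [InnerProductSpace.harmonicAt_congr_nhds (eventually_of_mem (hs.mem_nhds hz) hf)]
  exact (hs.analyticOn_iff_analyticOnNhd.1 hh z hz).harmonicAt.add
    (hs.analyticOn_iff_analyticOnNhd.1 hg z hz).harmonicAt_conj

theorem harmonic_riesz_fejer_large_p_general (hp : 2 ≤ p) (hf : MemHarmonicHardy f p)
    (hF : HasRadialLimit f F) (t : ℝ) :
    ∫ x in -1..1, ‖f (circleMap 0 x t)‖ ^ p ≤ ∫ θ in 0..2 * π, ‖F θ‖ ^ p := by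
  have f_cont := hf.harmonicOnNhd.continuousOn
  have F_meas : AEStronglyMeasurable F angleMeasure := hF.aestronglyMeasurable f_cont
  have diameter_meas : AEStronglyMeasurable (fun x => f (circleMap 0 x t))
      (volume.restrict (Set.Ioo (-1) 1)) := by
    refine ContinuousOn.aestronglyMeasurable ?_ measurableSet_Ioo
    refine f_cont.comp ?_ fun x hx => circleMap_zero_mem_ball hx t
    simp only [circleMap_zero]
    fun_prop
  have key : ∫⁻ x in Set.Ioo (-1) 1, ‖f (circleMap 0 x t)‖ₑ ^ p
      ≤ ∫⁻ θ, ‖F θ‖ₑ ^ p ∂angleMeasure :=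
    calc ∫⁻ x in Set.Ioo (-1) 1, ‖f (circleMap 0 x t)‖ₑ ^ p
        ≤ ∫⁻ x in Set.Ioo (-1) 1, poissonExtension (fun θ => ‖F θ‖ₑ) (circleMap 0 x t) ^ p :=
          setLIntegral_mono' measurableSet_Ioo fun x hx => by
            grw [hF.enorm_le_poissonExtension hf (by linarith) (circleMap_zero_mem_ball hx t)]
      _ ≤ ∫⁻ θ, ‖F θ‖ₑ ^ p ∂angleMeasure := lintegral_poissonExtension_rpow_le hp F_meas.enorm t
  rw [intervalIntegral.integral_of_le (by norm_num), integral_Ioc_eq_integral_Ioo,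
    intervalIntegral.integral_of_le (by positivity),
    integral_norm_rpow_eq_toReal_lintegral (by linarith) diameter_meas,
    integral_norm_rpow_eq_toReal_lintegral (by linarith) F_meas]
  exact ENNReal.toReal_mono (hF.lintegral_enorm_rpow_ne_top hf) key

end HarmonicHardy

end

/-- **Harmonic Riesz–Fejér inequality, `p ≥ 2`.** If `f = h + conj g` is a complex-valued
harmonic function on the unit disk (`h, g` analytic) belonging to the harmonic Hardy space
`h^p`, with a.e. radial boundary values `F`, then for all real `t`,
`∫_{-1}^{1} |f(x e^{it})|^p dx ≤ ∫₀^{2π} |F(θ)|^p dθ`. -/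
theorem harmonic_riesz_fejer_large_p (p : ℝ) (hp : 2 ≤ p)
    (h g f : ℂ → ℂ) (F : ℝ → ℂ)
    (hh : AnalyticOn ℂ h (Metric.ball 0 1)) (hg : AnalyticOn ℂ g (Metric.ball 0 1))
    (hf : ∀ z ∈ Metric.ball (0:ℂ) 1, f z = h z + starRingEnd ℂ (g z))
    (hHp : ∃ C : ℝ, ∀ r : ℝ, 0 ≤ r → r < 1 →
      (∫ θ in (0:ℝ)..(2 * π), ‖f ((r : ℂ) * Complex.exp (θ * Complex.I))‖ ^ p) ≤ C)
    (hF : ∀ᵐ θ : ℝ, Tendsto (fun r : ℝ => f ((r : ℂ) * Complex.exp (θ * Complex.I)))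
      (nhdsWithin 1 (Set.Iio 1)) (nhds (F θ))) (t : ℝ) :
    (∫ x in (-1:ℝ)..1, ‖f ((x : ℂ) * Complex.exp (t * Complex.I))‖ ^ p) ≤
      ∫ θ in (0:ℝ)..(2 * π), ‖F θ‖ ^ p := by
  obtain ⟨C, hC⟩ := hHp
  simp only [← circleMap_zero] at hC hF ⊢
  exact harmonic_riesz_fejer_large_p_general hp
    (.of_integral_le (by linarith) (harmonicOnNhd_add_conj Metric.isOpen_ball hh hg hf)
      fun r hr => hC r hr.1 hr.2) (ae_restrict_of_ae hF) t
end

section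
/- Let f = h + conj(g) with h(z) = Σ a_k z^k and g(z) = Σ_{k≥1} b_k z^k analytic on the unit disk, and suppose f belongs to the harmonic Hardy space h². Then for all real t, ∫_{-1}^{1} |f(x e^{it})|² dx ≤ (1/2) ∫₀^{2π} |f(e^{iθ})|² dθ + 2π Re(Σ_{k≥1} a_k b_k e^{2ikt}). -/
open Complex MeasureTheory Real Filter
open scoped ComplexConjugate ENNReal NNReal Topology

/-!
Put `u = e^{it}`. For real `x`, the value `f (x u) = h (x u) + conj (g (x u))` equals `Φ x`, where
`Φ z = h (u z) + conj (g (u conj z))` is analytic with Taylor coefficients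
`cₖ = aₖ uᵏ + conj (bₖ uᵏ)`. The Riesz–Fejér inequality bounds `∫ |Φ|²` over the diameter by
`π ∑ |cₖ|²`, and `|cₖ|² = |aₖ|² + |bₖ|² + 2 Re (aₖ bₖ u²ᵏ)`. By Parseval's identity for the boundary
function, `2π ∑ (|aₖ|² + |bₖ|²) = ∫ |F|²`.
-/

theorem hasFPowerSeriesOnBall_ofScalars_of_hasSum {c : ℕ → ℂ} {Φ : ℂ → ℂ} {R : ℝ≥0} (hR : 0 < R)
    (hΦ : ∀ z ∈ Metric.ball (0 : ℂ) R, HasSum (fun k : ℕ => c k * z ^ k) (Φ z)) :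
    HasFPowerSeriesOnBall Φ (.ofScalars ℂ c) 0 R where
  r_le := by
    refine ENNReal.le_of_forall_nnreal_lt fun r hr => ?_
    refine FormalMultilinearSeries.le_radius_of_summable _ ?_
    simpa using (hΦ r (by simpa using hr)).summable.norm
  r_pos := by exact_mod_cast hR
  hasSum {z} hz := by
    rw [Metric.eball_coe] at hz
    simpa [mul_comm] using hΦ z hz

theorem differentiableOn_of_hasSum_pow {c : ℕ → ℂ} {Φ : ℂ → ℂ} {R : ℝ≥0} (hR : 0 < R)
    (hΦ : ∀ z ∈ Metric.ball (0 : ℂ) R, HasSum (fun k : ℕ => c k * z ^ k) (Φ z)) :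
    DifferentiableOn ℂ Φ (Metric.ball 0 R) := by
  simpa only [Metric.eball_coe] using
    (hasFPowerSeriesOnBall_ofScalars_of_hasSum hR hΦ).differentiableOn

theorem ofReal_mul_exp_mem_ball {r R : ℝ} (hr0 : 0 ≤ r) (hrR : r < R) (θ : ℝ) :
    (r : ℂ) * Complex.exp (θ * I) ∈ Metric.ball (0 : ℂ) R := by
  simpa [Complex.norm_exp_ofReal_mul_I, abs_of_nonneg hr0] using hrR

section Diameter

variable {R r : ℝ}

theorem ofReal_mem_ball_of_mem_uIcc_neg (hr0 : 0 ≤ r) (hrR : r < R) {x : ℝ}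
    (hx : x ∈ Set.uIcc (-r) r) : (x : ℂ) ∈ Metric.ball (0 : ℂ) R := by
  rw [Set.uIcc_of_le (by linarith)] at hx
  simpa using (abs_le.2 hx).trans_lt hrR

theorem integral_upper_semicircle_eq_neg_integral_diameter {E : Type*} [NormedAddCommGroup E]
    [NormedSpace ℂ E] [CompleteSpace E] {Ψ : ℂ → E}
    (hΨ : DifferentiableOn ℂ Ψ (Metric.ball 0 R)) (hr0 : 0 ≤ r) (hrR : r < R) :
    ∫ θ in (0 : ℝ)..π, (r * Complex.exp (θ * I) * I) • Ψ (r * Complex.exp (θ * I)) =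
      -∫ x in (-r)..r, Ψ x := by
  obtain ⟨P, hP⟩ := hΨ.isExactOn_ball
  have h_diameter : ∫ x in (-r)..r, Ψ x = P r - P (-r) := by
    have hmem (x : ℝ) (hx : x ∈ Set.uIcc (-r) r) := ofReal_mem_ball_of_mem_uIcc_neg hr0 hrR hx
    have hcont : ContinuousOn (fun x : ℝ => Ψ x) (Set.uIcc (-r) r) :=
      hΨ.continuousOn.comp continuous_ofReal.continuousOn hmem
    have hderiv (x : ℝ) (hx : x ∈ Set.uIcc (-r) r) : HasDerivAt (fun x : ℝ => P x) (Ψ x) x := by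
      simpa using! (hP _ (hmem x hx)).scomp x ofRealCLM.hasDerivAt
    simpa using intervalIntegral.integral_eq_sub_of_hasDerivAt hderiv hcont.intervalIntegrable
  have h_semicircle : ∫ θ in (0 : ℝ)..π, (r * Complex.exp (θ * I) * I) •
      Ψ (r * Complex.exp (θ * I)) = P (-r) - P r := by
    have hmem := ofReal_mul_exp_mem_ball hr0 hrR
    have hderiv (θ : ℝ) : HasDerivAt (fun θ : ℝ => (r : ℂ) * Complex.exp (θ * I))
        (r * Complex.exp (θ * I) * I) θ := by
      simpa [mul_assoc] using
        (((hasDerivAt_id (θ : ℂ)).mul_const I).cexp.const_mul (r : ℂ)).comp_ofReal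
    have hcont : Continuous fun θ : ℝ =>
        (r * Complex.exp (θ * I) * I) • Ψ (r * Complex.exp (θ * I)) :=
      (by fun_prop : Continuous fun θ : ℝ => r * Complex.exp (θ * I) * I).smul
        (hΨ.continuousOn.comp_continuous (by fun_prop) hmem)
    simpa using intervalIntegral.integral_eq_sub_of_hasDerivAt
      (fun θ _ => (hP _ (hmem θ)).scomp θ (hderiv θ)) (hcont.intervalIntegrable 0 π)
  rw [h_diameter, h_semicircle, neg_sub]

theorem norm_integral_diameter_le_integral_upper_semicircle {E : Type*} [NormedAddCommGroup E]
    [NormedSpace ℂ E] [CompleteSpace E] {Ψ : ℂ → E}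
    (hΨ : DifferentiableOn ℂ Ψ (Metric.ball 0 R)) (hr0 : 0 ≤ r) (hrR : r < R) :
    ‖∫ x in (-r)..r, Ψ x‖ ≤ r * ∫ θ in (0 : ℝ)..π, ‖Ψ (r * Complex.exp (θ * I))‖ := by
  rw [← norm_neg, ← integral_upper_semicircle_eq_neg_integral_diameter hΨ hr0 hrR,
    ← intervalIntegral.integral_const_mul]
  refine (intervalIntegral.norm_integral_le_integral_norm pi_pos.le).trans_eq ?_
  simp [norm_smul, Complex.norm_exp_ofReal_mul_I, abs_of_nonneg hr0]

theorem integral_add_comp_neg {E : Type*} [NormedAddCommGroup E] [NormedSpace ℝ E] {φ : ℝ → E}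
    {a : ℝ} (hφ : IntervalIntegrable φ volume (-a) a) (h0 : IntervalIntegrable φ volume 0 a) :
    ∫ x in (0 : ℝ)..a, (φ x + φ (-x)) = ∫ x in (-a)..a, φ x := by
  have h0' : IntervalIntegrable φ volume (-a) 0 := hφ.trans h0.symm
  rw [intervalIntegral.integral_add h0 (by simpa using (h0'.comp_sub_left 0).symm),
    intervalIntegral.integral_comp_neg, neg_zero, add_comm,
    intervalIntegral.integral_add_adjacent_intervals h0' h0]

theorem differentiableOn_conj_conj_ball {Φ : ℂ → ℂ} (hΦ : DifferentiableOn ℂ Φ (Metric.ball 0 R)) :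
    DifferentiableOn ℂ (fun z => conj (Φ (conj z))) (Metric.ball 0 R) := by
  intro z hz
  have hz' : conj z ∈ Metric.ball (0 : ℂ) R := by simpa using hz
  have := (hΦ.differentiableAt (Metric.isOpen_ball.mem_nhds hz')).conj_conj
  rw [Complex.conj_conj] at this
  exact this.differentiableWithinAt

/- `‖Φ x‖ ^ 2` is the restriction to the real axis of the analytic function
`Φ z * conj (Φ (conj z))`, so its integral can be moved to the upper semicircle. There AM-GM
separates the values of `Φ` at `z` and at `conj z`, which together cover the whole circle. -/
theorem integral_diameter_norm_sq_le {Φ : ℂ → ℂ} (hΦ : DifferentiableOn ℂ Φ (Metric.ball 0 R))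
    (hr0 : 0 ≤ r) (hrR : r < R) :
    ∫ x in (-r)..r, ‖Φ x‖ ^ 2 ≤ r / 2 * ∫ θ in (-π)..π, ‖Φ (r * Complex.exp (θ * I))‖ ^ 2 := by
  let Ψ : ℂ → ℂ := fun z => Φ z * conj (Φ (conj z))
  have hΨ : DifferentiableOn ℂ Ψ (Metric.ball 0 R) := hΦ.mul (differentiableOn_conj_conj_ball hΦ)
  have hmem := ofReal_mul_exp_mem_ball hr0 hrR
  let φ : ℝ → ℝ := fun θ => ‖Φ (r * Complex.exp (θ * I))‖ ^ 2
  have hφ : Continuous φ := (hΦ.continuousOn.comp_continuous (by fun_prop) hmem).norm.pow 2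
  have hΨ_real : ∫ x in (-r)..r, Ψ x = ((∫ x in (-r)..r, ‖Φ x‖ ^ 2 : ℝ) : ℂ) := by
    simp only [Ψ, conj_ofReal, mul_conj, normSq_eq_norm_sq, intervalIntegral.integral_ofReal]
  have hΨ_circle (θ : ℝ) : ‖Ψ (r * Complex.exp (θ * I))‖ ≤ 1 / 2 * (φ θ + φ (-θ)) := by
    have hconj : conj ((r : ℂ) * Complex.exp (θ * I)) = r * Complex.exp ((-θ : ℝ) * I) := by
      simp [← Complex.exp_conj]
    simp only [Ψ, φ, norm_mul, RCLike.norm_conj, hconj]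
    linarith [two_mul_le_add_sq ‖Φ (r * Complex.exp (θ * I))‖
      ‖Φ (r * Complex.exp ((-θ : ℝ) * I))‖]
  have hΨ_cont : Continuous fun θ : ℝ => ‖Ψ (r * Complex.exp (θ * I))‖ :=
    (hΨ.continuousOn.comp_continuous (by fun_prop) hmem).norm
  calc ∫ x in (-r)..r, ‖Φ x‖ ^ 2
    _ ≤ ‖∫ x in (-r)..r, Ψ x‖ := by
      rw [hΨ_real, Complex.norm_real]; exact le_abs_self _
    _ ≤ r * ∫ θ in (0 : ℝ)..π, ‖Ψ (r * Complex.exp (θ * I))‖ :=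
      norm_integral_diameter_le_integral_upper_semicircle hΨ hr0 hrR
    _ ≤ r * ∫ θ in (0 : ℝ)..π, 1 / 2 * (φ θ + φ (-θ)) := by
      refine mul_le_mul_of_nonneg_left ?_ hr0
      exact intervalIntegral.integral_mono pi_pos.le (hΨ_cont.intervalIntegrable _ _)
        ((by fun_prop : Continuous _).intervalIntegrable _ _) hΨ_circle
    _ = r / 2 * ∫ θ in (-π)..π, φ θ := by
      rw [intervalIntegral.integral_const_mul, integral_add_comp_neg
        (hφ.intervalIntegrable _ _) (hφ.intervalIntegrable _ _)]
      ring

end Diameter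

theorem intervalIntegrable_of_forall_intervalIntegral_neg_le {φ : ℝ → ℝ} {R M : ℝ} (hR : 0 < R)
    (hφ : ContinuousOn φ (Set.Ioo (-R) R)) (hφ0 : ∀ x, 0 ≤ φ x)
    (h : ∀ r ∈ Set.Ioo 0 R, ∫ x in (-r)..r, φ x ≤ M) : IntervalIntegrable φ volume (-R) R := by
  obtain ⟨r, -, hr, hr_tendsto⟩ := exists_seq_strictMono_tendsto' hR
  rw [intervalIntegrable_iff_integrableOn_Ioc_of_le (by linarith)]
  refine integrableOn_Ioc_of_intervalIntegral_norm_bounded (I := M) (fun k => ?_)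
    hr_tendsto.neg hr_tendsto (Eventually.of_forall fun k => ?_)
  · refine (hφ.mono ?_).integrableOn_Icc.mono_set Set.Ioc_subset_Icc_self
    exact Set.Icc_subset_Ioo (neg_lt_neg (hr k).2) (hr k).2
  · simp only [norm_of_nonneg (hφ0 _)]
    rw [← intervalIntegral.integral_of_le (by linarith [(hr k).1])]
    exact h _ (hr k)

theorem intervalIntegral_neg_le_of_forall_lt {φ : ℝ → ℝ} {R M : ℝ} (hR : 0 < R)
    (hφ : IntervalIntegrable φ volume (-R) R)
    (h : ∀ r ∈ Set.Ioo 0 R, ∫ x in (-r)..r, φ x ≤ M) : ∫ x in (-R)..R, φ x ≤ M := by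
  have hr : Tendsto (fun r : ℝ => r) (𝓝[<] R) (𝓝 R) := tendsto_id'.2 nhdsWithin_le_nhds
  rw [intervalIntegrable_iff_integrableOn_Ioc_of_le (by linarith)] at hφ
  have hlim := (aecover_Ioc_of_Ioc hr.neg hr).integral_tendsto_of_countably_generated hφ
  rw [intervalIntegral.integral_of_le (by linarith)]
  refine le_of_tendsto hlim ?_
  filter_upwards [Ioo_mem_nhdsLT hR] with r hr
  rw [Measure.restrict_restrict_of_subset (Set.Ioc_subset_Ioc (neg_le_neg hr.2.le) hr.2.le),
    ← intervalIntegral.integral_of_le (by linarith [hr.1])]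
  exact h r hr

theorem memℓp_of_summable_norm {ι : Type*} {E : ι → Type*} [∀ i, NormedAddCommGroup (E i)]
    {f : ∀ i, E i} (hf : Summable fun i => ‖f i‖) {p : ℝ≥0∞} (hp : 1 ≤ p) : Memℓp f p :=
  (memℓp_gen (p := 1) (by simpa using hf)).of_exponent_ge hp

theorem memℓp_two_iff_summable_norm_sq {ι : Type*} {E : ι → Type*}
    [∀ i, NormedAddCommGroup (E i)] {f : ∀ i, E i} :
    Memℓp f 2 ↔ Summable fun i => ‖f i‖ ^ 2 := by
  simp [memℓp_gen_iff (show 0 < (2 : ℝ≥0∞).toReal by norm_num)]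

theorem tendsto_lp_of_tendsto_multiplier {α ι 𝕜 : Type*} {E : ι → Type*} [NormedField 𝕜]
    [∀ i, NormedAddCommGroup (E i)] [∀ i, NormedSpace 𝕜 (E i)] {p : ℝ≥0∞} [Fact (1 ≤ p)]
    (hp : p ≠ ∞) {l : Filter α} {w : α → ι → 𝕜} (hw_le : ∀ k i, ‖w k i‖ ≤ 1)
    (hw : ∀ i, Tendsto (w · i) l (𝓝 1)) {D : lp E p} {W : α → lp E p}
    (hW : ∀ k i, W k i = w k i • D i) : Tendsto W l (𝓝 D) := by
  have hp0 : 0 < p.toReal := ENNReal.toReal_pos (zero_lt_one.trans_le Fact.out).ne' hp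
  have hD : Summable fun i => (2 * ‖D i‖) ^ p.toReal := by
    simp only [Real.mul_rpow zero_le_two (norm_nonneg _)]
    exact ((lp.memℓp D).summable hp0).mul_left _
  have h_sub (k : α) (i : ι) : (W k - D) i = (w k i - 1) • D i := by
    simp [hW, sub_smul]
  have h_rpow : Tendsto (fun k => ‖W k - D‖ ^ p.toReal) l (𝓝 0) := by
    simp only [lp.norm_rpow_eq_tsum hp0, h_sub, norm_smul]
    rw [← tsum_zero (β := ι)]
    refine tendsto_tsum_of_dominated_convergence hD (fun i => ?_)
      (Eventually.of_forall fun k i => ?_)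
    · simpa [hp0.ne'] using
        ((((hw i).sub_const 1).norm.mul_const ‖D i‖).rpow_const (Or.inr hp0.le))
    · rw [Real.norm_of_nonneg (by positivity)]
      gcongr
      calc ‖w k i - 1‖ ≤ ‖w k i‖ + ‖(1 : 𝕜)‖ := norm_sub_le _ _
        _ ≤ 2 := by rw [norm_one]; linarith [hw_le k i]
  rw [tendsto_iff_norm_sub_tendsto_zero]
  simpa [Real.rpow_rpow_inv (norm_nonneg _) hp0.ne', hp0.ne'] using
    h_rpow.rpow_const (p := p.toReal⁻¹) (Or.inr (by positivity))

section Fourier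

variable {T : ℝ} [hT : Fact (0 < T)]

theorem ae_coe_addCircle_of_ae_haarAddCircle {p : AddCircle T → Prop}
    (hp : ∀ᵐ x ∂AddCircle.haarAddCircle, p x) : ∀ᵐ θ : ℝ, p θ := by
  have hp_vol : ∀ᵐ x ∂(volume : Measure (AddCircle T)), p x := by
    rw [AddCircle.volume_eq_smul_haarAddCircle]
    exact Measure.ae_smul_measure hp _
  rw [← Measure.restrict_univ (μ := volume), ← iUnion_Ioc_add_zsmul hT.out 0,
    ae_restrict_iUnion_iff]
  intro n
  rw [show (0 : ℝ) + (n + 1) • T = (0 + n • T) + T by simp [add_mul]]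
  exact (AddCircle.measurePreserving_mk T _).quasiMeasurePreserving.ae hp_vol

theorem fourierBasis_repr_symm_coe_ae_eq {e : lp (fun _ : ℤ => ℂ) 2}
    (he : Summable fun n => ‖e n‖) {φ : ℝ → ℂ}
    (hφ : ∀ θ : ℝ, HasSum (fun n => e n * fourier n (θ : AddCircle T)) (φ θ)) :
    ∀ᵐ θ : ℝ, fourierBasis.repr.symm e (θ : AddCircle T) = φ θ := by
  obtain ⟨G, hG⟩ : Summable fun n => e n • fourier (T := T) n :=
    .of_norm (by simpa [norm_smul, fourier_norm] using he)
  have hG_toLp : HasSum (fun n => e n • fourierLp (T := T) 2 n)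
      (ContinuousMap.toLp 2 AddCircle.haarAddCircle ℂ G) := by
    simpa [fourierLp] using!
      (ContinuousMap.toLp (E := ℂ) 2 (@AddCircle.haarAddCircle T _) ℂ).hasSum hG
  have h_repr : HasSum (fun n => e n • fourierLp (T := T) 2 n) (fourierBasis.repr.symm e) := by
    simpa using (fourierBasis (T := T)).hasSum_repr_symm e
  have hGφ (θ : ℝ) : G θ = φ θ :=
    ((ContinuousMap.evalCLM ℂ (θ : AddCircle T)).hasSum hG).unique (hφ θ)
  rw [h_repr.unique hG_toLp]
  filter_upwards [ae_coe_addCircle_of_ae_haarAddCircle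
    (ContinuousMap.coeFn_toLp (p := 2) (𝕜 := ℂ) (@AddCircle.haarAddCircle T _) G)] with θ hθ
  rw [hθ, hGφ]

theorem intervalIntegral_coe_addCircle {E : Type*} [NormedAddCommGroup E] [NormedSpace ℝ E]
    (G : AddCircle T → E) (s : ℝ) :
    ∫ θ in s..(s + T), G θ = T • ∫ x, G x ∂AddCircle.haarAddCircle := by
  rw [AddCircle.intervalIntegral_preimage, AddCircle.volume_eq_smul_haarAddCircle,
    integral_smul_measure, ENNReal.toReal_ofReal hT.out.le]

theorem integral_norm_sq_of_fourierBasis_repr_symm_coe_ae_eq (e : lp (fun _ : ℤ => ℂ) 2)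
    {φ : ℝ → ℂ} (hφ : ∀ᵐ θ : ℝ, fourierBasis.repr.symm e (θ : AddCircle T) = φ θ) (s : ℝ) :
    ∫ θ in s..(s + T), ‖φ θ‖ ^ 2 = T * ∑' n, ‖e n‖ ^ 2 := by
  calc ∫ θ in s..(s + T), ‖φ θ‖ ^ 2
    _ = ∫ θ in s..(s + T), ‖fourierBasis.repr.symm e (θ : AddCircle T)‖ ^ 2 :=
      intervalIntegral.integral_congr_ae (hφ.mono fun θ hθ _ => by rw [← hθ])
    _ = T * ∫ x : AddCircle T, ‖fourierBasis.repr.symm e x‖ ^ 2 ∂AddCircle.haarAddCircle :=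
      intervalIntegral_coe_addCircle (fun x => ‖fourierBasis.repr.symm e x‖ ^ 2) s
    _ = T * ∑' n, ‖e n‖ ^ 2 := by
      simp only [← tsum_sq_fourierCoeff, ← fourierBasis_repr,
        LinearIsometryEquiv.apply_symm_apply]

theorem integral_norm_sq_eq_tsum_of_hasSum_fourier {e : ℤ → ℂ} (he : Summable fun n => ‖e n‖)
    {φ : ℝ → ℂ} (hφ : ∀ θ : ℝ, HasSum (fun n => e n * fourier n (θ : AddCircle T)) (φ θ))
    (s : ℝ) : ∫ θ in s..(s + T), ‖φ θ‖ ^ 2 = T * ∑' n, ‖e n‖ ^ 2 := by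
  let E : lp (fun _ : ℤ => ℂ) 2 := ⟨e, memℓp_of_summable_norm he one_le_two⟩
  exact integral_norm_sq_of_fourierBasis_repr_symm_coe_ae_eq E
    (fourierBasis_repr_symm_coe_ae_eq (e := E) he hφ) s

end Fourier

/-- The function `f` has the expansion `f (r e^{iθ}) = ∑ₙ eₙ r^|n| e^{inθ}` on the open unit disk,
i.e. it is the harmonic function with the Fourier coefficients `eₙ`. The expansion is written in
polar coordinates so that for fixed `r` it is the Fourier series of `f` on a circle. -/
def HasHarmonicExpansion (e : ℤ → ℂ) (f : ℂ → ℂ) : Prop :=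
  ∀ r θ : ℝ, 0 ≤ r → r < 1 →
    HasSum (fun n : ℤ => e n * r ^ n.natAbs * Complex.exp (θ * I) ^ n)
      (f (r * Complex.exp (θ * I)))

theorem fourier_coe_two_pi (n : ℤ) (θ : ℝ) :
    fourier n (θ : AddCircle (2 * π)) = Complex.exp (θ * I) ^ n := by
  have hπ : (π : ℂ) ≠ 0 := ofReal_ne_zero.2 pi_ne_zero
  rw [fourier_coe_apply, ← Complex.exp_int_mul]
  congr 1
  push_cast
  field_simp

local instance fact_two_pi_pos : Fact (0 < 2 * π) := ⟨Real.two_pi_pos⟩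

namespace HasHarmonicExpansion

variable {e : ℤ → ℂ} {f : ℂ → ℂ} {r : ℝ}

theorem hasSum_fourier (hf : HasHarmonicExpansion e f) (hr0 : 0 ≤ r) (hr1 : r < 1) (θ : ℝ) :
    HasSum (fun n : ℤ => e n * r ^ n.natAbs * fourier n (θ : AddCircle (2 * π)))
      (f (r * Complex.exp (θ * I))) := by
  simpa only [fourier_coe_two_pi] using hf r θ hr0 hr1

theorem summable_norm (hf : HasHarmonicExpansion e f) (hr0 : 0 ≤ r) (hr1 : r < 1) :
    Summable fun n : ℤ => ‖e n * (r : ℂ) ^ n.natAbs‖ := by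
  simpa using (hf r 0 hr0 hr1).summable.norm

theorem integral_circle_norm_sq (hf : HasHarmonicExpansion e f) (hr0 : 0 ≤ r) (hr1 : r < 1)
    (s : ℝ) : ∫ θ in s..(s + 2 * π), ‖f (r * Complex.exp (θ * I))‖ ^ 2 =
      2 * π * ∑' n : ℤ, ‖e n * (r : ℂ) ^ n.natAbs‖ ^ 2 :=
  integral_norm_sq_eq_tsum_of_hasSum_fourier (hf.summable_norm hr0 hr1)
    (hf.hasSum_fourier hr0 hr1) s

theorem summable_norm_sq_mul_pow (hf : HasHarmonicExpansion e f) (hr0 : 0 ≤ r) (hr1 : r < 1) :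
    Summable fun n : ℤ => ‖e n * (r : ℂ) ^ n.natAbs‖ ^ 2 :=
  memℓp_two_iff_summable_norm_sq.1 (memℓp_of_summable_norm (hf.summable_norm hr0 hr1) one_le_two)

theorem integral_circle_norm_sq_le (hf : HasHarmonicExpansion e f)
    (he : Summable fun n => ‖e n‖ ^ 2) (hr0 : 0 ≤ r) (hr1 : r < 1) (s : ℝ) :
    ∫ θ in s..(s + 2 * π), ‖f (r * Complex.exp (θ * I))‖ ^ 2 ≤ 2 * π * ∑' n, ‖e n‖ ^ 2 := by
  rw [hf.integral_circle_norm_sq hr0 hr1]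
  refine mul_le_mul_of_nonneg_left ?_ two_pi_pos.le
  refine (hf.summable_norm_sq_mul_pow hr0 hr1).tsum_le_tsum (fun n => ?_) he
  rw [norm_mul, norm_pow, Complex.norm_of_nonneg hr0]
  gcongr
  exact mul_le_of_le_one_right (norm_nonneg _) (pow_le_one₀ hr0 hr1.le)

theorem summable_norm_sq (hf : HasHarmonicExpansion e f) {C : ℝ}
    (hC : ∀ r : ℝ, 0 ≤ r → r < 1 →
      ∫ θ in (0 : ℝ)..(2 * π), ‖f (r * Complex.exp (θ * I))‖ ^ 2 ≤ C) :
    Summable fun n => ‖e n‖ ^ 2 := by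
  refine summable_of_sum_le (c := C / (2 * π)) (fun _ => by positivity) fun u => ?_
  have hlim : Tendsto (fun r : ℝ => ∑ n ∈ u, ‖e n * (r : ℂ) ^ n.natAbs‖ ^ 2) (𝓝[<] 1)
      (𝓝 (∑ n ∈ u, ‖e n‖ ^ 2)) := by
    have hcont : Continuous fun r : ℝ => ∑ n ∈ u, ‖e n * (r : ℂ) ^ n.natAbs‖ ^ 2 := by fun_prop
    simpa using (hcont.tendsto 1).mono_left nhdsWithin_le_nhds
  refine le_of_tendsto hlim ?_
  filter_upwards [Ioo_mem_nhdsLT zero_lt_one] with r ⟨hr0, hr1⟩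
  have hsum := hf.summable_norm_sq_mul_pow hr0.le hr1
  rw [le_div_iff₀' two_pi_pos]
  calc 2 * π * ∑ n ∈ u, ‖e n * (r : ℂ) ^ n.natAbs‖ ^ 2
    _ ≤ 2 * π * ∑' n : ℤ, ‖e n * (r : ℂ) ^ n.natAbs‖ ^ 2 := by
      gcongr
      exact hsum.sum_le_tsum u fun _ _ => by positivity
    _ = ∫ θ in (0 : ℝ)..(2 * π), ‖f (r * Complex.exp (θ * I))‖ ^ 2 := by
      simpa using (hf.integral_circle_norm_sq hr0.le hr1 0).symm
    _ ≤ C := hC r hr0.le hr1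

/- The functions `θ ↦ f (r e^{iθ})` converge as `r → 1` in `L²` to the function with Fourier
coefficients `e`. Along a subsequence they also converge almost everywhere, so the `L²` limit is the
radial limit `F`. -/
theorem fourierBasis_repr_symm_coe_ae_eq_radial_limit (hf : HasHarmonicExpansion e f)
    (he : Memℓp e 2) {F : ℝ → ℂ}
    (hF : ∀ᵐ θ : ℝ, Tendsto (fun r : ℝ => f (r * Complex.exp (θ * I))) (𝓝[<] 1) (𝓝 (F θ))) :
    ∀ᵐ θ : ℝ, fourierBasis.repr.symm (⟨e, he⟩ : lp (fun _ : ℤ => ℂ) 2)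
      (θ : AddCircle (2 * π)) = F θ := by
  obtain ⟨r, -, hr, hr_tendsto⟩ := exists_seq_strictMono_tendsto' (zero_lt_one' ℝ)
  have hr_left : Tendsto r atTop (𝓝[<] 1) :=
    tendsto_nhdsWithin_iff.2 ⟨hr_tendsto, .of_forall fun k => (hr k).2⟩
  have hsum (k : ℕ) := hf.summable_norm (hr k).1.le (hr k).2
  let W : ℕ → lp (fun _ : ℤ => ℂ) 2 := fun k =>
    ⟨fun n => e n * (r k : ℂ) ^ n.natAbs, memℓp_of_summable_norm (hsum k) one_le_two⟩
  have hW : Tendsto W atTop (𝓝 ⟨e, he⟩) := by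
    refine tendsto_lp_of_tendsto_multiplier (w := fun k n => (r k : ℂ) ^ n.natAbs) (by simp)
      (fun k n => ?_) (fun n => ?_) fun k n => mul_comm _ _
    · rw [norm_pow, Complex.norm_of_nonneg (hr k).1.le]
      exact pow_le_one₀ (hr k).1.le (hr k).2.le
    · simpa using ((continuous_ofReal.tendsto 1).comp hr_tendsto).pow n.natAbs
  have hL2 := (((fourierBasis (T := 2 * π)).repr.symm.continuous.tendsto _).comp hW)
  obtain ⟨ns, hns, hae⟩ := (tendstoInMeasure_of_tendsto_Lp hL2).exists_seq_tendsto_ae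
  have hW_eq (k : ℕ) : ∀ᵐ θ : ℝ, fourierBasis.repr.symm (W k) (θ : AddCircle (2 * π)) =
      f (r k * Complex.exp (θ * I)) :=
    fourierBasis_repr_symm_coe_ae_eq (e := W k) (hsum k)
      (hf.hasSum_fourier (hr k).1.le (hr k).2)
  filter_upwards [ae_all_iff.2 hW_eq, hF, ae_coe_addCircle_of_ae_haarAddCircle hae]
    with θ hθ_eq hθ_radial hθ_seq
  refine tendsto_nhds_unique hθ_seq ?_
  exact ((hθ_radial.comp hr_left).comp hns.tendsto_atTop).congr fun k => (hθ_eq (ns k)).symm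

theorem integral_radial_limit_norm_sq (hf : HasHarmonicExpansion e f)
    (he : Summable fun n => ‖e n‖ ^ 2) {F : ℝ → ℂ}
    (hF : ∀ᵐ θ : ℝ, Tendsto (fun r : ℝ => f (r * Complex.exp (θ * I))) (𝓝[<] 1) (𝓝 (F θ)))
    (s : ℝ) : ∫ θ in s..(s + 2 * π), ‖F θ‖ ^ 2 = 2 * π * ∑' n, ‖e n‖ ^ 2 :=
  integral_norm_sq_of_fourierBasis_repr_symm_coe_ae_eq _
    (hf.fourierBasis_repr_symm_coe_ae_eq_radial_limit (memℓp_two_iff_summable_norm_sq.2 he) hF) s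

end HasHarmonicExpansion

/-- The coefficients of the harmonic expansion of `∑ₖ aₖ zᵏ + conj (∑ₖ bₖ zᵏ)`. The value `b 0` is
ignored: it is meant to vanish, the constant term being `a 0`. -/
def harmonicCoeff (a b : ℕ → ℂ) : ℤ → ℂ
  | .ofNat n => a n
  | .negSucc n => conj (b (n + 1))

section HarmonicCoeff

variable {a b : ℕ → ℂ}

@[simp]
theorem harmonicCoeff_natCast (n : ℕ) : harmonicCoeff a b n = a n := rfl

theorem harmonicCoeff_neg_succ (n : ℕ) : harmonicCoeff a b (-(n + 1 : ℤ)) = conj (b (n + 1)) := by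
  rw [← Int.negSucc_eq]; rfl

theorem hasSum_norm_sq_harmonicCoeff (hb0 : b 0 = 0) {A B : ℝ}
    (ha : HasSum (fun k => ‖a k‖ ^ 2) A) (hb : HasSum (fun k => ‖b k‖ ^ 2) B) :
    HasSum (fun n => ‖harmonicCoeff a b n‖ ^ 2) (A + B) := by
  refine .of_nat_of_neg_add_one (by simpa using ha) ?_
  simp only [harmonicCoeff_neg_succ, RCLike.norm_conj]
  simpa [hb0] using (hasSum_nat_add_iff' 1).2 hb

theorem summable_norm_sq_of_harmonicCoeff (h : Summable fun n => ‖harmonicCoeff a b n‖ ^ 2) :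
    (Summable fun k => ‖a k‖ ^ 2) ∧ Summable fun k => ‖b k‖ ^ 2 := by
  constructor
  · exact h.comp_injective (i := ((↑) : ℕ → ℤ)) Nat.cast_injective
  · rw [← summable_nat_add_iff 1]
    have hneg := h.comp_injective (i := fun n : ℕ => -(n + 1 : ℤ)) fun m n hmn => by
      simpa using hmn
    simpa only [Function.comp_def, harmonicCoeff_neg_succ, RCLike.norm_conj] using hneg

theorem hasHarmonicExpansion_add_conj {f g h : ℂ → ℂ}
    (hh : ∀ z ∈ Metric.ball (0 : ℂ) 1, HasSum (fun k : ℕ => a k * z ^ k) (h z))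
    (hg : ∀ z ∈ Metric.ball (0 : ℂ) 1, HasSum (fun k : ℕ => b k * z ^ k) (g z))
    (hb0 : b 0 = 0) (hf : ∀ z ∈ Metric.ball (0 : ℂ) 1, f z = h z + conj (g z)) :
    HasHarmonicExpansion (harmonicCoeff a b) f := by
  intro r θ hr0 hr1
  have hz := ofReal_mul_exp_mem_ball hr0 hr1 θ
  rw [hf _ hz]
  refine HasSum.of_nat_of_neg_add_one ?_ ?_
  · simpa [mul_pow, mul_assoc] using hh _ hz
  · have hconj : conj (Complex.exp (θ * I)) = (Complex.exp (θ * I))⁻¹ := by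
      simp [← Complex.exp_conj, ← Complex.exp_neg]
    have htail := (hasSum_nat_add_iff' 1).2 (Complex.hasSum_conj'.2 (hg _ hz))
    simp only [Finset.range_one, Finset.sum_singleton, hb0, zero_mul, map_zero, sub_zero] at htail
    refine htail.congr_fun fun n => ?_
    have h_natAbs : (-(n + 1 : ℤ)).natAbs = n + 1 := by lia
    have h_zpow (w : ℂ) : w ^ (-(n + 1 : ℤ)) = w⁻¹ ^ (n + 1) := by
      rw [← inv_zpow', ← Nat.cast_succ, zpow_natCast]
    rw [harmonicCoeff_neg_succ, h_natAbs, h_zpow, ← hconj]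
    simp only [map_mul, map_pow, conj_ofReal, mul_pow, mul_assoc]

end HarmonicCoeff

section RieszFejer

variable {c : ℕ → ℂ} {Φ : ℂ → ℂ}

theorem integral_diameter_norm_sq_le_of_lt
    (hΦ : ∀ z ∈ Metric.ball (0 : ℂ) 1, HasSum (fun k : ℕ => c k * z ^ k) (Φ z))
    (hc : Summable fun k => ‖c k‖ ^ 2) {r : ℝ} (hr0 : 0 ≤ r) (hr1 : r < 1) :
    ∫ x in (-r)..r, ‖Φ x‖ ^ 2 ≤ π * ∑' k, ‖c k‖ ^ 2 := by
  have hexp : HasHarmonicExpansion (harmonicCoeff c 0) Φ :=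
    hasHarmonicExpansion_add_conj (g := 0) hΦ (by simp) rfl (by simp)
  have hcoeff : HasSum (fun n => ‖harmonicCoeff c 0 n‖ ^ 2) (∑' k, ‖c k‖ ^ 2) := by
    simpa using hasSum_norm_sq_harmonicCoeff (b := 0) (B := 0) rfl hc.hasSum (by simp)
  have hcircle : ∫ θ in (-π)..π, ‖Φ (r * Complex.exp (θ * I))‖ ^ 2 ≤ 2 * π * ∑' k, ‖c k‖ ^ 2 := by
    have hle := hexp.integral_circle_norm_sq_le hcoeff.summable hr0 hr1 (-π)
    rwa [hcoeff.tsum_eq, show -π + 2 * π = π by ring] at hle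
  calc ∫ x in (-r)..r, ‖Φ x‖ ^ 2
    _ ≤ r / 2 * ∫ θ in (-π)..π, ‖Φ (r * Complex.exp (θ * I))‖ ^ 2 :=
      integral_diameter_norm_sq_le (by simpa using differentiableOn_of_hasSum_pow one_pos hΦ)
        hr0 hr1
    _ ≤ r / 2 * (2 * π * ∑' k, ‖c k‖ ^ 2) := by gcongr
    _ ≤ 1 / 2 * (2 * π * ∑' k, ‖c k‖ ^ 2) := by gcongr
    _ = π * ∑' k, ‖c k‖ ^ 2 := by ring

theorem riesz_fejer
    (hΦ : ∀ z ∈ Metric.ball (0 : ℂ) 1, HasSum (fun k : ℕ => c k * z ^ k) (Φ z))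
    (hc : Summable fun k => ‖c k‖ ^ 2) :
    ∫ x in (-1 : ℝ)..1, ‖Φ x‖ ^ 2 ≤ π * ∑' k, ‖c k‖ ^ 2 := by
  have hle (r : ℝ) (hr : r ∈ Set.Ioo 0 1) := integral_diameter_norm_sq_le_of_lt hΦ hc hr.1.le hr.2
  have hcont : ContinuousOn (fun x : ℝ => ‖Φ x‖ ^ 2) (Set.Ioo (-1) 1) := by
    have hΦ_diff : DifferentiableOn ℂ Φ (Metric.ball 0 1) := by
      simpa using differentiableOn_of_hasSum_pow one_pos hΦ
    exact (hΦ_diff.continuousOn.comp continuous_ofReal.continuousOn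
      fun x hx => by simpa using abs_lt.2 hx).norm.pow 2
  exact intervalIntegral_neg_le_of_forall_lt one_pos
    (intervalIntegrable_of_forall_intervalIntegral_neg_le one_pos hcont
      (fun _ => by positivity) hle) hle

end RieszFejer

theorem hasSum_norm_sq_add_conj {ι : Type*} {a b : ι → ℂ} {A B : ℝ} {S : ℂ}
    (ha : HasSum (fun k => ‖a k‖ ^ 2) A) (hb : HasSum (fun k => ‖b k‖ ^ 2) B)
    (hS : HasSum (fun k => a k * b k) S) :
    HasSum (fun k => ‖a k + conj (b k)‖ ^ 2) (A + B + 2 * S.re) := by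
  refine ((ha.add hb).add ((Complex.hasSum_re hS).mul_left 2)).congr_fun fun k => ?_
  simp only [← normSq_eq_norm_sq, normSq_add, Complex.conj_conj, normSq_conj]

theorem integral_diameter_norm_sq_add_conj_le {a b : ℕ → ℂ} {g h : ℂ → ℂ} {A B : ℝ} {S : ℂ}
    (hh : ∀ z ∈ Metric.ball (0 : ℂ) 1, HasSum (fun k : ℕ => a k * z ^ k) (h z))
    (hg : ∀ z ∈ Metric.ball (0 : ℂ) 1, HasSum (fun k : ℕ => b k * z ^ k) (g z))
    (ha : HasSum (fun k => ‖a k‖ ^ 2) A) (hb : HasSum (fun k => ‖b k‖ ^ 2) B)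
    (hS : HasSum (fun k => a k * b k) S) :
    ∫ x in (-1 : ℝ)..1, ‖h x + conj (g x)‖ ^ 2 ≤ π * (A + B + 2 * S.re) := by
  have hc := hasSum_norm_sq_add_conj ha hb hS
  have hΦ (z : ℂ) (hz : z ∈ Metric.ball (0 : ℂ) 1) :
      HasSum (fun k : ℕ => (a k + conj (b k)) * z ^ k) (h z + conj (g (conj z))) := by
    have hconj := Complex.hasSum_conj'.2 (hg (conj z) (by simpa using hz))
    simpa [add_mul] using (hh z hz).add hconj
  simpa only [conj_ofReal, hc.tsum_eq] using riesz_fejer hΦ hc.summable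

theorem hasSum_pow_comp_mul {c : ℕ → ℂ} {Φ : ℂ → ℂ} {R : ℝ}
    (hΦ : ∀ z ∈ Metric.ball (0 : ℂ) R, HasSum (fun k : ℕ => c k * z ^ k) (Φ z)) {u : ℂ}
    (hu : ‖u‖ = 1) :
    ∀ z ∈ Metric.ball (0 : ℂ) R, HasSum (fun k : ℕ => c k * u ^ k * z ^ k) (Φ (z * u)) := by
  intro z hz
  refine (hΦ (z * u) (by simpa [hu] using hz)).congr_fun fun k => ?_
  rw [mul_pow, mul_assoc, mul_comm (z ^ k)]

theorem integral_rotated_diameter_norm_sq_le {a b : ℕ → ℂ} {f g h : ℂ → ℂ} {A B : ℝ} {S u : ℂ}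
    (hh : ∀ z ∈ Metric.ball (0 : ℂ) 1, HasSum (fun k : ℕ => a k * z ^ k) (h z))
    (hg : ∀ z ∈ Metric.ball (0 : ℂ) 1, HasSum (fun k : ℕ => b k * z ^ k) (g z))
    (hf : ∀ z ∈ Metric.ball (0 : ℂ) 1, f z = h z + conj (g z)) (hu : ‖u‖ = 1)
    (ha : HasSum (fun k => ‖a k‖ ^ 2) A) (hb : HasSum (fun k => ‖b k‖ ^ 2) B)
    (hS : HasSum (fun k => a k * b k * u ^ (2 * k)) S) :
    ∫ x in (-1 : ℝ)..1, ‖f (x * u)‖ ^ 2 ≤ π * (A + B + 2 * S.re) := by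
  have hcongr : ∫ x in (-1 : ℝ)..1, ‖f (x * u)‖ ^ 2 =
      ∫ x in (-1 : ℝ)..1, ‖h (x * u) + conj (g (x * u))‖ ^ 2 := by
    refine intervalIntegral.integral_congr_Ioo_of_le (by norm_num) fun x hx => ?_
    simp only [hf _ (show (x : ℂ) * u ∈ Metric.ball 0 1 by simpa [hu] using abs_lt.2 hx)]
  rw [hcongr]
  refine integral_diameter_norm_sq_add_conj_le (hasSum_pow_comp_mul hh hu)
    (hasSum_pow_comp_mul hg hu) (by simpa [hu] using ha) (by simpa [hu] using hb)
    (hS.congr_fun fun k => ?_)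
  ring

/-- If `f = h + conj g` is harmonic on the unit disk, with `h(z) = Σ aₖ zᵏ`,
`g(z) = Σ_{k≥1} bₖ zᵏ`, and `f ∈ h²` with a.e. radial boundary values `F`, then for all real `t`,
`∫_{-1}^{1} |f(x e^{it})|² dx ≤ (1/2) ∫₀^{2π} |F(θ)|² dθ + 2π Re (Σ_{k≥1} aₖ bₖ e^{2ikt})`. -/
theorem harmonic_riesz_fejer_coeff (h g f : ℂ → ℂ) (a b : ℕ → ℂ) (F : ℝ → ℂ)
    (hh : ∀ z ∈ Metric.ball (0:ℂ) 1, HasSum (fun k : ℕ => a k * z ^ k) (h z))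
    (hg : ∀ z ∈ Metric.ball (0:ℂ) 1, HasSum (fun k : ℕ => b k * z ^ k) (g z))
    (hb0 : b 0 = 0)
    (hf : ∀ z ∈ Metric.ball (0:ℂ) 1, f z = h z + starRingEnd ℂ (g z))
    (hH2 : ∃ C : ℝ, ∀ r : ℝ, 0 ≤ r → r < 1 →
      (∫ θ in (0:ℝ)..(2 * π), ‖f ((r : ℂ) * Complex.exp (θ * Complex.I))‖ ^ 2) ≤ C)
    (hF : ∀ᵐ θ : ℝ, Tendsto (fun r : ℝ => f ((r : ℂ) * Complex.exp (θ * Complex.I)))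
      (nhdsWithin 1 (Set.Iio 1)) (nhds (F θ)))
    (t : ℝ)
    (hsum : Summable fun k : ℕ => a k * b k * Complex.exp (2 * k * t * Complex.I)) :
    (∫ x in (-1:ℝ)..1, ‖f ((x : ℂ) * Complex.exp (t * Complex.I))‖ ^ 2) ≤
      (1 / 2) * (∫ θ in (0:ℝ)..(2 * π), ‖F θ‖ ^ 2) +
        2 * π * (∑' k : ℕ, a k * b k * Complex.exp (2 * k * t * Complex.I)).re := by
  obtain ⟨C, hC⟩ := hH2
  have hexp : HasHarmonicExpansion (harmonicCoeff a b) f :=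
    hasHarmonicExpansion_add_conj hh hg hb0 hf
  have hcoeff := hexp.summable_norm_sq hC
  obtain ⟨ha, hb⟩ := summable_norm_sq_of_harmonicCoeff hcoeff
  have hboundary : ∫ θ in (0 : ℝ)..(2 * π), ‖F θ‖ ^ 2 =
      2 * π * (∑' k, ‖a k‖ ^ 2 + ∑' k, ‖b k‖ ^ 2) := by
    rw [← (hasSum_norm_sq_harmonicCoeff hb0 ha.hasSum hb.hasSum).tsum_eq]
    simpa using hexp.integral_radial_limit_norm_sq hcoeff hF 0
  have hexp_pow (k : ℕ) :
      Complex.exp (t * Complex.I) ^ (2 * k) = Complex.exp (2 * k * t * Complex.I) := by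
    rw [← Complex.exp_nat_mul]
    push_cast
    ring_nf
  refine (integral_rotated_diameter_norm_sq_le hh hg hf (norm_exp_ofReal_mul_I t) ha.hasSum
    hb.hasSum (by simpa only [hexp_pow] using hsum.hasSum)).trans_eq ?_
  rw [hboundary]
  ring
end
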